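/- arXiv:1107.0960 — 6 statements merged into one kernel-verified Lean document; each statement's English description precedes it below -/
import Mathlib

section
/- Let n ≥ 1 and let V, V₀ ∈ C^∞(ℝⁿ; [0,∞)) both satisfy the superexponential decay condition. Suppose V₀(x) = R(|x|) where R: [0,∞) → [0,∞) is smooth and R′(r) vanishes only at r = 0 and at those r with R(r) = 0. If ∫_{ℝⁿ} V(x)^k dx = ∫_{ℝⁿ} V₀(x)^k dx and ∫_{ℝⁿ} V(x)^k |∇V(x)|² dx = ∫_{ℝⁿ} V₀(x)^k |∇V₀(x)|² dx for every integer k ≥ n, then there exists x₀ ∈ ℝⁿ such that V(x) = V₀(x − x₀) for all x ∈ ℝⁿ. -/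
open MeasureTheory Real

/-- The superexponential decay condition \eqref{e:ass}: `|W(x)| ≤ A exp(-B|x|^{1+ε})`
and all derivatives of `W` are bounded. -/
def SuperExpDecay {n : ℕ} (W : EuclideanSpace ℝ (Fin n) → ℝ) : Prop :=
  (∃ ε A B : ℝ, 0 < ε ∧ 0 < A ∧ 0 < B ∧
    ∀ x, |W x| ≤ A * Real.exp (-B * ‖x‖ ^ (1 + ε))) ∧
  ∀ k : ℕ, ∃ C : ℝ, ∀ x, ‖iteratedFDeriv ℝ k W x‖ ≤ C

/-! The high moments of `V` and of `V ^ k * ‖∇V‖²` determine, by Stone–Weierstrass, the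
distribution of `V` on `(0, ∞)` under Lebesgue measure and under the measure with density `‖∇V‖²`.
Both agree with those of `V₀`. The superlevel sets of `V₀` are balls, so the Brunn–Minkowski
inequality, applied to thickened superlevel sets and differentiated in the thickness, gives
`∫ g(V) ‖∇V‖ ≥ ∫ g(V₀) ‖∇V₀‖` for `g ≥ 0`. Since `‖∇V₀‖ = p(V₀)` for a function `p`, expanding
squares then yields `∫ (ψ(V) ‖∇V‖ - (ψp)(V))² ≤ ∫ (ψ(V₀) ‖∇V₀‖ - (ψp)(V₀))² = 0`, that is,
`‖∇V‖ = p(V)` wherever `0 < V < max V₀`. Along a ray from a maximum point `x₀` of `V`, the function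
therefore decreases no faster than the profile of `V₀`, so `V ≥ V₀(· - x₀)`; as the two sides have
superlevel sets of equal volume, they coincide. -/

open Filter Metric Set
open scoped ENNReal Pointwise Topology

section BrunnMinkowski

theorem volume_add_volume_le_of_isCompact {K L C : Set ℝ} (hK : IsCompact K) (hL : IsCompact L)
    (hKne : K.Nonempty) (hLne : L.Nonempty) (h : K + L ⊆ C) :
    volume K + volume L ≤ volume C := by
  obtain ⟨a, haK, ha⟩ := hK.exists_isGreatest hKne
  obtain ⟨b, hbL, hb⟩ := hL.exists_isLeast hLne
  have translates_aedisjoint : AEDisjoint volume ((· + b) '' K) ((a + ·) '' L) := by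
    refine measure_mono_null (t := {a + b}) ?_ (measure_singleton _)
    rintro _ ⟨⟨x, hx, rfl⟩, ⟨y, hy, hxy⟩⟩
    have hxa : x ≤ a := ha hx
    have hby : b ≤ y := hb hy
    simp only [mem_singleton_iff] at hxy ⊢
    linarith
  have hmeas : MeasurableSet ((a + ·) '' L) := (hL.image (by fun_prop)).measurableSet
  calc volume K + volume L
      = volume ((· + b) '' K ∪ (a + ·) '' L) := by
        rw [measure_union₀ hmeas.nullMeasurableSet translates_aedisjoint, image_add_right,
          image_add_left, measure_preimage_add_right, measure_preimage_add]
    _ ≤ volume C := by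
        refine measure_mono (Subset.trans (union_subset ?_ ?_) h)
        · exact image_subset_iff.2 fun x hx => add_mem_add hx hbL
        · exact image_subset_iff.2 fun y hy => add_mem_add haK hy

theorem volume_add_volume_le_of_add_subset {A B C : Set ℝ} (hA : MeasurableSet A)
    (hB : MeasurableSet B) (hAne : A.Nonempty) (hBne : B.Nonempty) (h : A + B ⊆ C) :
    volume A + volume B ≤ volume C := by
  obtain ⟨a, ha⟩ := hAne
  obtain ⟨b, hb⟩ := hBne
  rw [hA.measure_eq_iSup_isCompact, hB.measure_eq_iSup_isCompact]
  simp only [iSup_and']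
  refine ENNReal.biSup_add_biSup_le' ⟨∅, empty_subset _, isCompact_empty⟩
    ⟨∅, empty_subset _, isCompact_empty⟩ ?_
  rintro K ⟨hKA, hK⟩ L ⟨hLB, hL⟩
  -- The singletons keep both compact sets nonempty.
  calc volume K + volume L
      ≤ volume (insert a K) + volume (insert b L) := by gcongr <;> exact subset_insert _ _
    _ ≤ volume C := volume_add_volume_le_of_isCompact (hK.insert a) (hL.insert b)
        (insert_nonempty a K) (insert_nonempty b L)
        ((add_subset_add (insert_subset ha hKA) (insert_subset hb hLB)).trans h)

variable {l m : ℝ}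

theorem ennreal_rpow_mul_rpow_le_add (hl : 0 < l) (hm : 0 < m) (hlm : l + m = 1) (a b : ℝ≥0∞) :
    a ^ l * b ^ m ≤ ENNReal.ofReal l * a + ENNReal.ofReal m * b := by
  have conjugate : (l⁻¹).HolderConjugate m⁻¹ :=
    Real.holderConjugate_iff.2 ⟨(one_lt_inv₀ hl).2 (by linarith), by simpa using hlm⟩
  have young := ENNReal.young_inequality (a ^ l) (b ^ m) conjugate
  rw [← ENNReal.rpow_mul, ← ENNReal.rpow_mul, mul_inv_cancel₀ hl.ne', mul_inv_cancel₀ hm.ne',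
    ENNReal.rpow_one, ENNReal.rpow_one, ENNReal.ofReal_inv_of_pos hl,
    ENNReal.ofReal_inv_of_pos hm] at young
  simpa [div_eq_mul_inv, mul_comm] using young

/-- The measure `μ` satisfies the Prékopa–Leindler inequality with weights `l` and `m`. -/
def IsPrekopaLeindler {E : Type*} [AddCommGroup E] [Module ℝ E] [MeasurableSpace E]
    (μ : Measure E) (l m : ℝ) : Prop :=
  ∀ f g h : E → ℝ≥0∞, Measurable f → Measurable g → Measurable h →
    (∀ x y, f x ^ l * g y ^ m ≤ h (l • x + m • y)) →
    (∫⁻ x, f x ∂μ) ^ l * (∫⁻ x, g x ∂μ) ^ m ≤ ∫⁻ x, h x ∂μ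

namespace IsPrekopaLeindler

variable {E F : Type*} [AddCommGroup E] [Module ℝ E] [MeasurableSpace E]
  [AddCommGroup F] [Module ℝ F] [MeasurableSpace F] {μ : Measure E} {ν : Measure F}

theorem prod [SFinite ν] (hμ : IsPrekopaLeindler μ l m) (hν : IsPrekopaLeindler ν l m) :
    IsPrekopaLeindler (μ.prod ν) l m := by
  intro f g h hf hg hh hfgh
  rw [lintegral_prod _ hf.aemeasurable, lintegral_prod _ hg.aemeasurable,
    lintegral_prod _ hh.aemeasurable]
  refine hμ _ _ _ hf.lintegral_prod_right' hg.lintegral_prod_right' hh.lintegral_prod_right'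
    fun x x' => ?_
  exact hν _ _ _ (hf.comp measurable_prodMk_left) (hg.comp measurable_prodMk_left)
    (hh.comp measurable_prodMk_left) fun y y' => hfgh (x, y) (x', y')

theorem of_measurePreserving (hμ : IsPrekopaLeindler μ l m) (e : E →ₗ[ℝ] F)
    (he : MeasurePreserving e μ ν) : IsPrekopaLeindler ν l m := by
  intro f g h hf hg hh hfgh
  rw [← he.lintegral_comp hf, ← he.lintegral_comp hg, ← he.lintegral_comp hh]
  refine hμ _ _ _ (hf.comp he.measurable) (hg.comp he.measurable) (hh.comp he.measurable)
    fun x y => ?_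
  simpa using hfgh (e x) (e y)

theorem measure_rpow_mul_rpow_le (hμ : IsPrekopaLeindler μ l m) (hl : 0 < l) (hm : 0 < m)
    {A B C : Set E} (hA : MeasurableSet A) (hB : MeasurableSet B) (hC : MeasurableSet C)
    (h : ∀ x ∈ A, ∀ y ∈ B, l • x + m • y ∈ C) : μ A ^ l * μ B ^ m ≤ μ C := by
  have indicators := hμ (A.indicator 1) (B.indicator 1) (C.indicator 1)
    (measurable_one.indicator hA) (measurable_one.indicator hB) (measurable_one.indicator hC)
    fun x y => by
      by_cases hx : x ∈ A
      · by_cases hy : y ∈ B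
        · simp [hx, hy, h x hx y hy]
        · simp [hy, ENNReal.zero_rpow_of_pos hm]
      · simp [hx, ENNReal.zero_rpow_of_pos hl]
  simpa only [lintegral_indicator_one, hA, hB, hC] using indicators

end IsPrekopaLeindler

theorem lintegral_eq_lintegral_meas_ofReal_lt {α : Type*} [MeasurableSpace α] (μ : Measure α)
    {f : α → ℝ≥0∞} (hf : Measurable f) (hfin : ∀ x, f x ≠ ∞) :
    ∫⁻ x, f x ∂μ = ∫⁻ t in Ioi (0 : ℝ), μ {x | ENNReal.ofReal t < f x} := by
  calc ∫⁻ x, f x ∂μ = ∫⁻ x, ENNReal.ofReal (f x).toReal ∂μ :=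
        lintegral_congr fun x => (ENNReal.ofReal_toReal (hfin x)).symm
    _ = ∫⁻ t in Ioi (0 : ℝ), μ {x | t < (f x).toReal} :=
        lintegral_eq_lintegral_meas_lt μ (.of_forall fun _ => ENNReal.toReal_nonneg)
          hf.ennreal_toReal.aemeasurable
    _ = ∫⁻ t in Ioi (0 : ℝ), μ {x | ENNReal.ofReal t < f x} :=
        setLIntegral_congr_fun measurableSet_Ioi fun t ht => by
          simp only [ENNReal.ofReal_lt_iff_lt_toReal (le_of_lt ht) (hfin _)]

section Real

variable {f g h : ℝ → ℝ≥0∞}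

theorem volume_superlevel_add_le (hl : 0 < l) (hm : 0 < m) (hlm : l + m = 1)
    (hf : Measurable f) (hg : Measurable g)
    (hfgh : ∀ x y, f x ^ l * g y ^ m ≤ h (l • x + m • y))
    {t : ℝ≥0∞} (hft : ∃ x, t < f x) (hgt : ∃ x, t < g x) :
    ENNReal.ofReal l * volume {x | t < f x} + ENNReal.ofReal m * volume {x | t < g x} ≤
      volume {x | t < h x} := by
  have volume_dilate {c : ℝ} (hc : 0 < c) (A : Set ℝ) :
      ENNReal.ofReal c * volume A = volume (c • A) := by
    simp [Measure.addHaar_smul_of_nonneg _ hc.le]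
  rw [volume_dilate hl, volume_dilate hm]
  refine volume_add_volume_le_of_add_subset
    ((measurableSet_lt measurable_const hf).const_smul₀ l)
    ((measurableSet_lt measurable_const hg).const_smul₀ m)
    (Set.Nonempty.smul_set hft) (Set.Nonempty.smul_set hgt) ?_
  rintro _ ⟨_, ⟨x, hx, rfl⟩, _, ⟨y, hy, rfl⟩, rfl⟩
  calc t = t ^ l * t ^ m := by
        rw [← ENNReal.rpow_add_of_nonneg _ _ hl.le hm.le, hlm, ENNReal.rpow_one]
    _ < f x ^ l * g y ^ m := ENNReal.mul_lt_mul (ENNReal.rpow_lt_rpow hx hl)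
        (ENNReal.rpow_lt_rpow hy hm)
    _ ≤ h (l • x + m • y) := hfgh x y

theorem lintegral_add_lintegral_le_of_iSup_eq_one (hl : 0 < l) (hm : 0 < m) (hlm : l + m = 1)
    (hf : Measurable f) (hg : Measurable g) (hh : Measurable h)
    (hf1 : ⨆ x, f x = 1) (hg1 : ⨆ x, g x = 1)
    (hfgh : ∀ x y, f x ^ l * g y ^ m ≤ h (l • x + m • y)) :
    ENNReal.ofReal l * (∫⁻ x, f x) + ENNReal.ofReal m * (∫⁻ x, g x) ≤ ∫⁻ x, h x := by
  have hf_le (x : ℝ) : f x ≤ 1 := hf1 ▸ le_iSup f x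
  have hg_le (x : ℝ) : g x ≤ 1 := hg1 ▸ le_iSup g x
  have superlevel_le (t : ℝ) :
      ENNReal.ofReal l * volume {x | ENNReal.ofReal t < f x} +
        ENNReal.ofReal m * volume {x | ENNReal.ofReal t < g x} ≤
      volume {x | ENNReal.ofReal t < min (h x) 1} := by
    rcases lt_or_ge (ENNReal.ofReal t) 1 with ht | ht
    · simp only [lt_min_iff, ht, and_true]
      exact volume_superlevel_add_le hl hm hlm hf hg hfgh
        (lt_iSup_iff.1 (hf1 ▸ ht)) (lt_iSup_iff.1 (hg1 ▸ ht))
    · simp [((hf_le _).trans ht).not_gt, ((hg_le _).trans ht).not_gt]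
  have superlevel_antitone (u : ℝ → ℝ≥0∞) :
      Antitone fun t : ℝ => volume {x | ENNReal.ofReal t < u x} := fun s t hst =>
    measure_mono fun x hx => (ENNReal.ofReal_le_ofReal hst).trans_lt hx
  rw [lintegral_eq_lintegral_meas_ofReal_lt _ hf fun x => ne_top_of_le_ne_top (by simp) (hf_le x),
    lintegral_eq_lintegral_meas_ofReal_lt _ hg fun x => ne_top_of_le_ne_top (by simp) (hg_le x),
    ← lintegral_const_mul' _ _ ENNReal.ofReal_ne_top,
    ← lintegral_const_mul' _ _ ENNReal.ofReal_ne_top,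
    ← lintegral_add_left ((superlevel_antitone f).measurable.const_mul _)]
  calc _ ≤ ∫⁻ t in Ioi (0 : ℝ), volume {x | ENNReal.ofReal t < min (h x) 1} :=
        lintegral_mono superlevel_le
    _ = ∫⁻ x, min (h x) 1 := (lintegral_eq_lintegral_meas_ofReal_lt _ (hh.min measurable_const)
        fun x => ne_top_of_le_ne_top ENNReal.one_ne_top (min_le_right _ _)).symm
    _ ≤ ∫⁻ x, h x := lintegral_mono fun x => min_le_left _ _

theorem rpow_mul_rpow_lintegral_le_of_iSup_ne_top (hl : 0 < l) (hm : 0 < m) (hlm : l + m = 1)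
    (hf : Measurable f) (hg : Measurable g) (hh : Measurable h)
    (hf_top : ⨆ x, f x ≠ ∞) (hg_top : ⨆ x, g x ≠ ∞)
    (hfgh : ∀ x y, f x ^ l * g y ^ m ≤ h (l • x + m • y)) :
    (∫⁻ x, f x) ^ l * (∫⁻ x, g x) ^ m ≤ ∫⁻ x, h x := by
  set a := ⨆ x, f x with ha
  set b := ⨆ x, g x with hb
  rcases eq_or_ne a 0 with ha0 | ha0
  · have hf0 : ∀ x, f x = 0 := by simpa [ha] using ha0
    simp [hf0, ENNReal.zero_rpow_of_pos hl]
  rcases eq_or_ne b 0 with hb0 | hb0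
  · have hg0 : ∀ x, g x = 0 := by simpa [hb] using hb0
    simp [hg0, ENNReal.zero_rpow_of_pos hm]
  have hal0 : a ^ l ≠ 0 := by simp [ha0, hf_top]
  have hal_top : a ^ l ≠ ∞ := ENNReal.rpow_ne_top_of_nonneg hl.le hf_top
  have hbm0 : b ^ m ≠ 0 := by simp [hb0, hg_top]
  have hbm_top : b ^ m ≠ ∞ := ENNReal.rpow_ne_top_of_nonneg hm.le hg_top
  have rescale (u v : ℝ≥0∞) :
      (a⁻¹ * u) ^ l * (b⁻¹ * v) ^ m = (a ^ l * b ^ m)⁻¹ * (u ^ l * v ^ m) := by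
    rw [ENNReal.mul_rpow_of_nonneg _ _ hl.le, ENNReal.mul_rpow_of_nonneg _ _ hm.le,
      ENNReal.inv_rpow, ENNReal.inv_rpow, ENNReal.mul_inv (.inl hal0) (.inl hal_top)]
    ring
  have normalized := (ennreal_rpow_mul_rpow_le_add hl hm hlm _ _).trans <|
    lintegral_add_lintegral_le_of_iSup_eq_one hl hm hlm
      (h := fun x => (a ^ l * b ^ m)⁻¹ * h x)
      (hf.const_mul a⁻¹) (hg.const_mul b⁻¹) (hh.const_mul _)
      (by rw [← ENNReal.mul_iSup, ← ha, ENNReal.inv_mul_cancel ha0 hf_top])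
      (by rw [← ENNReal.mul_iSup, ← hb, ENNReal.inv_mul_cancel hb0 hg_top])
      (fun x y => by rw [rescale]; gcongr; exact hfgh x y)
  rw [lintegral_const_mul _ hf, lintegral_const_mul _ hg, lintegral_const_mul _ hh,
    rescale] at normalized
  exact (ENNReal.mul_le_mul_iff_right (ENNReal.inv_ne_zero.2 (ENNReal.mul_ne_top hal_top hbm_top))
    (ENNReal.inv_ne_top.2 (mul_ne_zero hal0 hbm0))).1 normalized

end Real

theorem tendsto_lintegral_min_natCast {α : Type*} [MeasurableSpace α] (μ : Measure α)
    {f : α → ℝ≥0∞} (hf : Measurable f) :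
    Tendsto (fun N : ℕ => ∫⁻ x, min (f x) N ∂μ) atTop (𝓝 (∫⁻ x, f x ∂μ)) := by
  refine lintegral_tendsto_of_tendsto_of_monotone
    (fun N => (hf.min measurable_const).aemeasurable) (.of_forall fun x N M hNM => ?_)
    (.of_forall fun x => ?_)
  · exact min_le_min le_rfl (by exact_mod_cast hNM)
  · simpa using (tendsto_const_nhds (x := f x)).min ENNReal.tendsto_nat_nhds_top

theorem isPrekopaLeindler_real (hl : 0 < l) (hm : 0 < m) (hlm : l + m = 1) :
    IsPrekopaLeindler (volume : Measure ℝ) l m := by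
  intro f g h hf hg hh hfgh
  rcases eq_or_ne (∫⁻ x, f x) 0 with hf0 | hf0
  · simp [hf0, ENNReal.zero_rpow_of_pos hl]
  rcases eq_or_ne (∫⁻ x, g x) 0 with hg0 | hg0
  · simp [hg0, ENNReal.zero_rpow_of_pos hm]
  have truncation := ENNReal.Tendsto.mul
    ((ENNReal.continuous_rpow_const (y := l)).continuousAt.tendsto.comp
      (tendsto_lintegral_min_natCast volume hf))
    (.inl (by simp [hf0, not_lt.2 hl.le]))
    ((ENNReal.continuous_rpow_const (y := m)).continuousAt.tendsto.comp
      (tendsto_lintegral_min_natCast volume hg))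
    (.inl (by simp [hg0, not_lt.2 hm.le]))
  have bounded (u : ℝ → ℝ≥0∞) (N : ℕ) : ⨆ x, min (u x) N ≠ ∞ :=
    ne_top_of_le_ne_top (ENNReal.natCast_ne_top N) (iSup_le fun x => min_le_right _ _)
  refine le_of_tendsto' truncation fun N => ?_
  refine rpow_mul_rpow_lintegral_le_of_iSup_ne_top hl hm hlm (hf.min measurable_const)
    (hg.min measurable_const) hh (bounded f N) (bounded g N) fun x y => le_trans ?_ (hfgh x y)
  gcongr <;> exact min_le_left _ _

theorem isPrekopaLeindler_pi (hl : 0 < l) (hm : 0 < m) (hlm : l + m = 1) (n : ℕ) :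
    IsPrekopaLeindler (volume : Measure (Fin n → ℝ)) l m := by
  induction n with
  | zero =>
    intro f g h hf hg hh hfgh
    rw [volume_pi, Measure.pi_of_empty (x := 0)]
    simpa [lintegral_dirac' _ hf, lintegral_dirac' _ hg, lintegral_dirac' _ hh] using hfgh 0 0
  | succ k ih =>
    refine ((isPrekopaLeindler_real hl hm hlm).prod ih).of_measurePreserving
      (Fin.consLinearEquiv ℝ fun _ : Fin (k + 1) => ℝ).toLinearMap ?_
    have cons_eq : ⇑(Fin.consLinearEquiv ℝ fun _ : Fin (k + 1) => ℝ) =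
        (MeasurableEquiv.piFinSuccAbove (fun _ : Fin (k + 1) => ℝ) 0).symm := by
      ext p i
      refine Fin.cases ?_ (fun j => ?_) i <;> simp
    exact cons_eq ▸ (volume_preserving_piFinSuccAbove (fun _ : Fin (k + 1) => ℝ) 0).symm

variable {E : Type*} [NormedAddCommGroup E] [InnerProductSpace ℝ E] [FiniteDimensional ℝ E]
  [MeasurableSpace E] [BorelSpace E]

theorem isPrekopaLeindler_volume (hl : 0 < l) (hm : 0 < m) (hlm : l + m = 1) :
    IsPrekopaLeindler (volume : Measure E) l m :=
  ((isPrekopaLeindler_pi hl hm hlm _).of_measurePreserving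
    (WithLp.linearEquiv 2 ℝ (Fin (Module.finrank ℝ E) → ℝ)).symm.toLinearMap
    (PiLp.volume_preserving_toLp _)).of_measurePreserving
    (stdOrthonormalBasis ℝ E).repr.symm.toLinearEquiv.toLinearMap
    (stdOrthonormalBasis ℝ E).measurePreserving_repr_symm

theorem volume_ball_add_le {A C : Set E} (hA : MeasurableSet A) (hC : MeasurableSet C) {r s : ℝ}
    (hr : 0 < r) (hs : 0 < s) (hAr : volume A = volume (ball (0 : E) r))
    (h : A + ball 0 s ⊆ C) : volume (ball (0 : E) (r + s)) ≤ volume C := by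
  have hrs : 0 < r + s := add_pos hr hs
  set l := r / (r + s) with hl_def
  set m := s / (r + s) with hm_def
  have hl : 0 < l := div_pos hr hrs
  have hm : 0 < m := div_pos hs hrs
  have hlm : l + m = 1 := by rw [hl_def, hm_def]; field_simp
  have dilate_ball {c : ℝ} (hc : 0 < c) (t : ℝ) : c • ball (0 : E) t = ball 0 (c * t) := by
    rw [_root_.smul_ball hc.ne', smul_zero, Real.norm_of_nonneg hc.le]
  have volume_dilate : volume (l⁻¹ • A) = volume (ball (0 : E) (r + s)) := by
    have hlr : l⁻¹ * r = r + s := by rw [hl_def]; field_simp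
    rw [← hlr, ← dilate_ball (inv_pos.2 hl), Measure.addHaar_smul, Measure.addHaar_smul, hAr]
  have hsum : ∀ x ∈ l⁻¹ • A, ∀ y ∈ ball (0 : E) (r + s), l • x + m • y ∈ C := by
    intro x hx y hy
    refine h (add_mem_add ((mem_inv_smul_set_iff₀ hl.ne' A x).1 hx) ?_)
    have hms : m * (r + s) = s := by rw [hm_def]; field_simp
    rw [← hms, ← dilate_ball hm]
    exact smul_mem_smul_set hy
  calc volume (ball (0 : E) (r + s))
      = volume (l⁻¹ • A) ^ l * volume (ball (0 : E) (r + s)) ^ m := by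
        rw [volume_dilate, ← ENNReal.rpow_add_of_nonneg _ _ hl.le hm.le, hlm, ENNReal.rpow_one]
    _ ≤ volume C := (isPrekopaLeindler_volume hl hm hlm).measure_rpow_mul_rpow_le hl hm
        (hA.const_smul₀ _) measurableSet_ball hC hsum

end BrunnMinkowski

section Moments

theorem integrable_pow_of_ae_mem_Icc {μ : Measure ℝ} [IsFiniteMeasure μ] {a b : ℝ}
    (hμ : ∀ᵐ t ∂μ, t ∈ Icc a b) (k : ℕ) : Integrable (fun t => t ^ k) μ := by
  obtain ⟨C, hC⟩ := isCompact_Icc.exists_bound_of_continuousOn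
    (continuous_pow k : Continuous fun t : ℝ => t ^ k).continuousOn (s := Icc a b)
  exact .of_bound (by fun_prop) C (hμ.mono hC)

theorem integral_polynomial_eq_of_forall_integral_pow_eq {μ ν : Measure ℝ}
    (hμ : ∀ k : ℕ, Integrable (fun t => t ^ k) μ) (hν : ∀ k : ℕ, Integrable (fun t => t ^ k) ν)
    (h : ∀ k : ℕ, ∫ t, t ^ k ∂μ = ∫ t, t ^ k ∂ν) (p : Polynomial ℝ) :
    ∫ t, p.eval t ∂μ = ∫ t, p.eval t ∂ν := by
  simp only [Polynomial.eval_eq_sum_range]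
  rw [integral_finsetSum _ fun k _ => (hμ k).const_mul _,
    integral_finsetSum _ fun k _ => (hν k).const_mul _]
  simp only [integral_const_mul, h]

theorem norm_integral_sub_le_of_ae_mem_Icc {μ : Measure ℝ} [IsFiniteMeasure μ] {a b : ℝ}
    (hμ : ∀ᵐ t ∂μ, t ∈ Icc a b) {f g : ℝ → ℝ} (hf : Integrable f μ) (hg : Integrable g μ)
    {ε : ℝ} (hfg : ∀ t ∈ Icc a b, |f t - g t| ≤ ε) :
    |∫ t, f t ∂μ - ∫ t, g t ∂μ| ≤ ε * μ.real univ := by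
  rw [← integral_sub hf hg]
  exact norm_integral_le_of_norm_le_const (f := fun t => f t - g t) (hμ.mono hfg)

theorem measure_eq_of_forall_integral_pow_eq {μ ν : Measure ℝ} [IsFiniteMeasure μ]
    [IsFiniteMeasure ν] {a b : ℝ} (hμ : ∀ᵐ t ∂μ, t ∈ Icc a b) (hν : ∀ᵐ t ∂ν, t ∈ Icc a b)
    (h : ∀ k : ℕ, ∫ t, t ^ k ∂μ = ∫ t, t ^ k ∂ν) : μ = ν := by
  refine ext_of_forall_integral_eq_of_IsFiniteMeasure fun f => ?_
  have polynomial_integrable {ρ : Measure ℝ} [IsFiniteMeasure ρ] (hρ : ∀ᵐ t ∂ρ, t ∈ Icc a b)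
      (p : Polynomial ℝ) : Integrable (fun t => p.eval t) ρ := by
    simp only [Polynomial.eval_eq_sum_range]
    exact integrable_finsetSum _ fun k _ => (integrable_pow_of_ae_mem_Icc hρ k).const_mul _
  have close (ε : ℝ) (hε : 0 < ε) :
      |∫ t, f t ∂μ - ∫ t, f t ∂ν| ≤ ε * (μ.real univ + ν.real univ) := by
    obtain ⟨p, hp⟩ := exists_polynomial_near_of_continuousOn a b f f.continuous.continuousOn ε hε
    have hfp : ∀ t ∈ Icc a b, |f t - p.eval t| ≤ ε := fun t ht => by
      rw [abs_sub_comm]; exact (hp t ht).le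
    have near_μ := norm_integral_sub_le_of_ae_mem_Icc hμ (f.integrable μ)
      (polynomial_integrable hμ p) hfp
    have near_ν := norm_integral_sub_le_of_ae_mem_Icc hν (f.integrable ν)
      (polynomial_integrable hν p) hfp
    rw [integral_polynomial_eq_of_forall_integral_pow_eq (integrable_pow_of_ae_mem_Icc hμ)
      (integrable_pow_of_ae_mem_Icc hν) h p] at near_μ
    rw [abs_le] at near_μ near_ν ⊢
    constructor <;> linarith [near_μ.1, near_μ.2, near_ν.1, near_ν.2]
  have small : Tendsto (fun ε : ℝ => ε * (μ.real univ + ν.real univ)) (𝓝[>] 0) (𝓝 0) := by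
    have : Continuous fun ε : ℝ => ε * (μ.real univ + ν.real univ) := by fun_prop
    simpa using (this.tendsto 0).mono_left nhdsWithin_le_nhds
  exact sub_eq_zero.1 <| abs_nonpos_iff.1 <|
    ge_of_tendsto small (eventually_nhdsWithin_of_forall close)

theorem restrict_Ioi_eq_of_forall_integral_pow_eq {μ ν : Measure ℝ} {A : ℝ} {m : ℕ}
    (hμ : ∀ᵐ t ∂μ, t ∈ Icc 0 A) (hν : ∀ᵐ t ∂ν, t ∈ Icc 0 A)
    (hμm : Integrable (fun t => t ^ m) μ) (hνm : Integrable (fun t => t ^ m) ν)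
    (h : ∀ k ≥ m, ∫ t, t ^ k ∂μ = ∫ t, t ^ k ∂ν) :
    μ.restrict (Ioi 0) = ν.restrict (Ioi 0) := by
  let w : ℝ → ℝ≥0∞ := fun t => ENNReal.ofReal (t ^ m)
  have hw : Measurable w := by fun_prop
  have moment {ρ : Measure ℝ} (hρ : ∀ᵐ t ∂ρ, t ∈ Icc 0 A) (k : ℕ) :
      ∫ t, t ^ k ∂ρ.withDensity w = ∫ t, t ^ (m + k) ∂ρ := by
    rw [integral_withDensity_eq_integral_toReal_smul hw (by simp [w])]
    refine integral_congr_ae (hρ.mono fun t ht => ?_)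
    simp only [w, ENNReal.toReal_ofReal (pow_nonneg ht.1 m), smul_eq_mul, pow_add]
  have : IsFiniteMeasure (μ.withDensity w) := isFiniteMeasure_withDensity_ofReal hμm.2
  have : IsFiniteMeasure (ν.withDensity w) := isFiniteMeasure_withDensity_ofReal hνm.2
  have weighted_eq : μ.withDensity w = ν.withDensity w :=
    measure_eq_of_forall_integral_pow_eq
      ((withDensity_absolutelyContinuous μ w).ae_le hμ)
      ((withDensity_absolutelyContinuous ν w).ae_le hν)
      fun k => by rw [moment hμ, moment hν, h _ (Nat.le_add_right m k)]
  have undo_weight (ρ : Measure ℝ) : ((ρ.withDensity w).restrict (Ioi 0)).withDensity w⁻¹ =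
      ρ.restrict (Ioi 0) := by
    rw [restrict_withDensity measurableSet_Ioi]
    refine withDensity_inv_same hw ?_ (.of_forall fun t => ENNReal.ofReal_ne_top)
    filter_upwards [ae_restrict_mem measurableSet_Ioi] with t ht
    simpa [w] using pow_pos ht m
  rw [← undo_weight μ, weighted_eq, undo_weight]

/-- The distribution of `V` under the measure `w μ`, restricted to the positive half-line. The
restriction keeps it finite away from `0` even when `{V = 0}` has infinite measure. -/
noncomputable def positiveDistribution {α : Type*} [MeasurableSpace α] (μ : Measure α)
    (V w : α → ℝ) : Measure ℝ :=
  ((μ.withDensity fun x => ENNReal.ofReal (w x)).map V).restrict (Ioi 0)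

variable {α β : Type*} [MeasurableSpace α] [MeasurableSpace β] {μ : Measure α} {ν : Measure β}
  {V w : α → ℝ} {V₀ w₀ : β → ℝ}

theorem integral_map_withDensity_ofReal (hV : Measurable V) (hw : Measurable w)
    (hw0 : ∀ x, 0 ≤ w x) {f : ℝ → ℝ} (hf : Measurable f) :
    ∫ t, f t ∂(μ.withDensity fun x => ENNReal.ofReal (w x)).map V = ∫ x, f (V x) * w x ∂μ := by
  rw [integral_map hV.aemeasurable hf.aestronglyMeasurable,
    integral_withDensity_eq_integral_toReal_smul hw.ennreal_ofReal (by simp)]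
  simp only [ENNReal.toReal_ofReal (hw0 _), smul_eq_mul, mul_comm]

theorem integrable_map_withDensity_ofReal (hV : Measurable V) (hw : Measurable w)
    (hw0 : ∀ x, 0 ≤ w x) {f : ℝ → ℝ} (hf : Measurable f) :
    Integrable f ((μ.withDensity fun x => ENNReal.ofReal (w x)).map V) ↔
      Integrable (fun x => f (V x) * w x) μ := by
  rw [integrable_map_measure hf.aestronglyMeasurable hV.aemeasurable,
    integrable_withDensity_iff hw.ennreal_ofReal (by simp)]
  simp only [Function.comp_apply, ENNReal.toReal_ofReal (hw0 _)]

theorem integral_positiveDistribution (hV : Measurable V) (hw : Measurable w)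
    (hw0 : ∀ x, 0 ≤ w x) {f : ℝ → ℝ} (hf : Measurable f) (hf0 : ∀ t ≤ 0, f t = 0) :
    ∫ t, f t ∂positiveDistribution μ V w = ∫ x, f (V x) * w x ∂μ := by
  rw [positiveDistribution, setIntegral_eq_integral_of_forall_compl_eq_zero (s := Ioi (0 : ℝ))
    fun t ht => hf0 t (not_lt.1 ht), integral_map_withDensity_ofReal hV hw hw0 hf]

theorem integral_comp_mul_eq_of_positiveDistribution_eq (hV : Measurable V) (hw : Measurable w)
    (hw0 : ∀ x, 0 ≤ w x) (hV₀ : Measurable V₀) (hw₀ : Measurable w₀) (hw₀0 : ∀ x, 0 ≤ w₀ x)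
    (h : positiveDistribution μ V w = positiveDistribution ν V₀ w₀) {f : ℝ → ℝ}
    (hf : Measurable f) (hf0 : ∀ t ≤ 0, f t = 0) :
    ∫ x, f (V x) * w x ∂μ = ∫ x, f (V₀ x) * w₀ x ∂ν := by
  rw [← integral_positiveDistribution hV hw hw0 hf hf0, h,
    integral_positiveDistribution hV₀ hw₀ hw₀0 hf hf0]

theorem positiveDistribution_one_Ioi (hV : Measurable V) {t : ℝ} (ht : 0 ≤ t) :
    positiveDistribution μ V 1 (Ioi t) = μ {x | t < V x} := by
  rw [positiveDistribution, Measure.restrict_apply measurableSet_Ioi, Ioi_inter_Ioi, max_eq_left ht,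
    Measure.map_apply hV measurableSet_Ioi]
  simp [withDensity_const, preimage]

theorem positiveDistribution_eq_of_forall_integral_pow_eq (hV : Measurable V) (hw : Measurable w)
    (hw0 : ∀ x, 0 ≤ w x) (hV₀ : Measurable V₀) (hw₀ : Measurable w₀) (hw₀0 : ∀ x, 0 ≤ w₀ x)
    {A : ℝ} (hVA : ∀ x, V x ∈ Icc 0 A) (hV₀A : ∀ x, V₀ x ∈ Icc 0 A) {m : ℕ}
    (hm : Integrable (fun x => V x ^ m * w x) μ) (hm₀ : Integrable (fun x => V₀ x ^ m * w₀ x) ν)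
    (h : ∀ k ≥ m, ∫ x, V x ^ k * w x ∂μ = ∫ x, V₀ x ^ k * w₀ x ∂ν) :
    positiveDistribution μ V w = positiveDistribution ν V₀ w₀ := by
  refine restrict_Ioi_eq_of_forall_integral_pow_eq (A := A) (m := m) ?_ ?_ ?_ ?_ fun k hk => ?_
  · exact (ae_map_iff hV.aemeasurable measurableSet_Icc).2 (.of_forall hVA)
  · exact (ae_map_iff hV₀.aemeasurable measurableSet_Icc).2 (.of_forall hV₀A)
  · exact (integrable_map_withDensity_ofReal hV hw hw0 (by fun_prop)).2 hm
  · exact (integrable_map_withDensity_ofReal hV₀ hw₀ hw₀0 (by fun_prop)).2 hm₀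
  · rw [integral_map_withDensity_ofReal hV hw hw0 (by fun_prop),
      integral_map_withDensity_ofReal hV₀ hw₀ hw₀0 (by fun_prop), h k hk]

end Moments

section Profile

/-- A profile `r ↦ R r` of a nonnegative radial function vanishing at infinity that has no critical
point `r > 0` with `R r ≠ 0`. The values of `R` on the negative half-line are irrelevant. -/
structure IsRadialProfile (R : ℝ → ℝ) : Prop where
  continuousOn : ContinuousOn R (Ici 0)
  contDiffOn : ContDiffOn ℝ 1 R (Ioi 0)
  nonneg : ∀ r, 0 ≤ r → 0 ≤ R r
  tendsto_zero : Tendsto R atTop (𝓝 0)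
  deriv_ne_zero : ∀ r, 0 < r → R r ≠ 0 → deriv R r ≠ 0

/-- The radius at which a radial profile takes the value `t`, for `0 < t < R 0`; arbitrary
otherwise. -/
noncomputable def levelRadius (R : ℝ → ℝ) : ℝ → ℝ := Function.invFunOn R (Ioi 0)

/-- The absolute slope of a radial profile at the radius where it takes the value `t`. -/
noncomputable def levelSlope (R : ℝ → ℝ) (t : ℝ) : ℝ := |deriv R (levelRadius R t)|

namespace IsRadialProfile

variable {R : ℝ → ℝ} (hR : IsRadialProfile R) {r s t : ℝ}

include hR

theorem apply_lt_apply (hr : 0 ≤ r) (hrs : r < s) (hpos : 0 < R r ∨ 0 < R s) : R s < R r := by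
  by_contra! hle
  have hs : 0 < R s := hpos.elim (·.trans_le hle) id
  obtain ⟨T, hT⟩ := eventually_atTop.1 (hR.tendsto_zero.eventually_lt_const hs)
  obtain ⟨p, hp, hmax⟩ := isCompact_Icc.exists_isMaxOn (s := Icc r (max s T))
    ⟨s, hrs.le, le_max_left s T⟩ (hR.continuousOn.mono fun x hx => hr.trans hx.1)
  have hsp : R s ≤ R p := hmax ⟨hrs.le, le_max_left s T⟩
  have global_max (x : ℝ) (hx : r ≤ x) : R x ≤ R p := by
    rcases le_total x (max s T) with hxT | hxT
    · exact hmax ⟨hx, hxT⟩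
    · exact (hT x ((le_max_right s T).trans hxT)).le.trans hsp
  obtain ⟨q, hrq, hq⟩ : ∃ q, r < q ∧ ∀ x, r ≤ x → R x ≤ R q := by
    rcases hp.1.eq_or_lt with rfl | hrp
    · exact ⟨s, hrs, fun x hx => (global_max x hx).trans hle⟩
    · exact ⟨p, hrp, global_max⟩
  have hloc : IsLocalMax R q := (lt_mem_nhds hrq).mono fun x hx => hq x hx.le
  exact hR.deriv_ne_zero q (hr.trans_lt hrq) (hs.trans_le (hq s hrs.le)).ne' hloc.deriv_eq_zero

theorem antitoneOn : AntitoneOn R (Ici 0) := by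
  intro r hr s hs hrs
  by_contra! hlt
  have hne : r ≠ s := by rintro rfl; exact hlt.false
  exact hlt.not_gt (hR.apply_lt_apply hr (hrs.lt_of_ne hne) (.inr ((hR.nonneg r hr).trans_lt hlt)))

theorem apply_le_apply_zero (hr : 0 ≤ r) : R r ≤ R 0 := hR.antitoneOn self_mem_Ici hr hr

theorem apply_lt_apply_iff (hr : 0 ≤ r) (hs : 0 ≤ s) (hRs : 0 < R s) : R s < R r ↔ r < s :=
  ⟨fun h => lt_of_not_ge fun hsr => h.not_ge (hR.antitoneOn hs hr hsr),
    fun h => hR.apply_lt_apply hr h (.inr hRs)⟩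

theorem differentiableAt (hr : 0 < r) : DifferentiableAt ℝ R r :=
  (hR.contDiffOn.contDiffAt (Ioi_mem_nhds hr)).differentiableAt one_ne_zero

theorem deriv_neg (hr : 0 < r) (hRr : 0 < R r) : deriv R r < 0 := by
  refine lt_of_le_of_ne ?_ (hR.deriv_ne_zero r hr hRr.ne')
  rw [← derivWithin_of_isOpen isOpen_Ioi hr]
  exact (hR.antitoneOn.mono Ioi_subset_Ici_self).derivWithin_nonpos

theorem levelRadius_spec (ht : t ∈ Ioo 0 (R 0)) :
    0 < levelRadius R t ∧ R (levelRadius R t) = t := by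
  refine Function.invFunOn_pos (f := R) (s := Ioi 0) ?_
  obtain ⟨T, hT0, hTt⟩ :=
    ((eventually_ge_atTop 0).and (hR.tendsto_zero.eventually_lt_const ht.1)).exists
  obtain ⟨r, hr, hrt⟩ := intermediate_value_Icc' hT0
    (hR.continuousOn.mono Icc_subset_Ici_self) ⟨hTt.le, ht.2.le⟩
  have hr0 : r ≠ 0 := by rintro rfl; exact ht.2.ne hrt.symm
  exact ⟨r, hr.1.lt_of_ne' hr0, hrt⟩

theorem apply_mem_Ioo (hr : 0 < r) (hRr : 0 < R r) : R r ∈ Ioo 0 (R 0) :=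
  ⟨hRr, hR.apply_lt_apply le_rfl hr (.inr hRr)⟩

theorem levelRadius_apply (hr : 0 < r) (hRr : 0 < R r) : levelRadius R (R r) = r := by
  obtain ⟨hpos, heq⟩ := hR.levelRadius_spec (hR.apply_mem_Ioo hr hRr)
  rcases lt_trichotomy (levelRadius R (R r)) r with h | h | h
  · exact absurd heq (hR.apply_lt_apply hpos.le h (.inr hRr)).ne'
  · exact h
  · exact absurd heq (hR.apply_lt_apply hr.le h (.inl hRr)).ne

theorem levelRadius_image_Ioo : levelRadius R '' Ioo 0 (R 0) = Ioi 0 ∩ R ⁻¹' Ioi 0 := by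
  ext r
  constructor
  · rintro ⟨t, ht, rfl⟩
    obtain ⟨hpos, heq⟩ := hR.levelRadius_spec ht
    exact ⟨hpos, ht.1.trans_eq heq.symm⟩
  · rintro ⟨hr, hRr⟩
    exact ⟨R r, hR.apply_mem_Ioo hr hRr, hR.levelRadius_apply hr hRr⟩

theorem antitoneOn_levelRadius : AntitoneOn (levelRadius R) (Ioo 0 (R 0)) := by
  intro t ht u hu htu
  obtain ⟨htpos, hteq⟩ := hR.levelRadius_spec ht
  obtain ⟨-, hueq⟩ := hR.levelRadius_spec hu
  by_contra! hlt
  have := hR.apply_lt_apply htpos.le hlt (.inl (hteq.symm ▸ ht.1))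
  linarith

theorem continuousOn_levelRadius : ContinuousOn (levelRadius R) (Ioo 0 (R 0)) := by
  intro t ht
  have image_open : IsOpen (levelRadius R '' Ioo 0 (R 0)) := by
    rw [hR.levelRadius_image_Ioo]
    exact (hR.continuousOn.mono Ioi_subset_Ici_self).isOpen_inter_preimage isOpen_Ioi isOpen_Ioi
  have image_neg_mem : (fun t => -levelRadius R t) '' Ioo 0 (R 0) ∈ 𝓝 (-levelRadius R t) := by
    rw [← image_image (fun r : ℝ => -r), image_neg_eq_neg]
    exact image_open.neg.mem_nhds (neg_mem_neg.2 (mem_image_of_mem _ ht))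
  have neg_continuousAt := continuousAt_of_monotoneOn_of_image_mem_nhds
    hR.antitoneOn_levelRadius.neg (Ioo_mem_nhds ht.1 ht.2) image_neg_mem
  simpa only [Pi.neg_def, neg_neg] using neg_continuousAt.neg.continuousWithinAt

theorem continuousOn_levelSlope : ContinuousOn (levelSlope R) (Ioo 0 (R 0)) :=
  ((hR.contDiffOn.continuousOn_deriv_of_isOpen isOpen_Ioi le_rfl).comp
    hR.continuousOn_levelRadius fun _ ht => (hR.levelRadius_spec ht).1).abs

theorem exists_superlevel_eq_ball {E : Type*} [SeminormedAddCommGroup E] (ht : 0 < t) :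
    ∃ ρ, {x : E | t < R ‖x‖} = ball 0 ρ := by
  rcases lt_or_ge t (R 0) with htR | htR
  · obtain ⟨hpos, heq⟩ := hR.levelRadius_spec ⟨ht, htR⟩
    refine ⟨levelRadius R t, ext fun x => ?_⟩
    rw [mem_ball_zero_iff, ← hR.apply_lt_apply_iff (norm_nonneg x) hpos.le (heq.symm ▸ ht), heq,
      mem_ofPred_eq]
  · refine ⟨0, ?_⟩
    rw [ball_zero]
    exact eq_empty_of_forall_notMem fun x hx =>
      (hx.trans_le (hR.apply_le_apply_zero (norm_nonneg x))).not_ge htR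

variable {E : Type*} [NormedAddCommGroup E] [InnerProductSpace ℝ E]

theorem norm_fderiv_eq_levelSlope {V₀ : E → ℝ} (hV₀ : ∀ x, V₀ x = R ‖x‖) {x : E}
    (hx : V₀ x ∈ Ioo 0 (R 0)) : ‖fderiv ℝ V₀ x‖ = levelSlope R (V₀ x) := by
  have hx0 : x ≠ 0 := by
    rintro rfl
    simp [hV₀] at hx
  have : Nontrivial E := ⟨x, 0, hx0⟩
  have norm_differentiable : DifferentiableAt ℝ (fun y : E => ‖y‖) x :=
    (contDiffAt_norm ℝ hx0 (n := 1)).differentiableAt one_ne_zero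
  have chain : HasFDerivAt V₀ (deriv R ‖x‖ • fderiv ℝ (fun y => ‖y‖) x) x := by
    rw [show V₀ = R ∘ fun y => ‖y‖ from funext hV₀]
    exact (hR.differentiableAt (norm_pos_iff.2 hx0)).hasDerivAt.comp_hasFDerivAt x
      norm_differentiable.hasFDerivAt
  rw [chain.fderiv, norm_smul, norm_fderiv_norm norm_differentiable, mul_one, Real.norm_eq_abs,
    levelSlope, hV₀, hR.levelRadius_apply (norm_pos_iff.2 hx0) (hV₀ x ▸ hx.1)]

omit hR in
theorem of_radial [ProperSpace E] [Nontrivial E] {V₀ : E → ℝ} (hV₀ : ContDiff ℝ 1 V₀)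
    (hV₀_nonneg : ∀ x, 0 ≤ V₀ x) (hV₀_zero : Tendsto V₀ (cocompact E) (𝓝 0))
    (hV₀R : ∀ x, V₀ x = R ‖x‖) (hR' : ∀ r, 0 ≤ r → deriv R r = 0 → r = 0 ∨ R r = 0) :
    IsRadialProfile R := by
  obtain ⟨u, hu⟩ := exists_norm_eq E zero_le_one
  have norm_ray {r : ℝ} (hr : 0 ≤ r) : ‖r • u‖ = r := by
    rw [norm_smul, hu, mul_one, Real.norm_of_nonneg hr]
  have ray_eq : EqOn R (fun r => V₀ (r • u)) (Ici 0) := fun r hr => by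
    simp only [hV₀R, norm_ray hr]
  have ray_contDiff : ContDiff ℝ 1 fun r : ℝ => V₀ (r • u) :=
    hV₀.comp (contDiff_id.smul contDiff_const)
  have ray_tendsto : Tendsto (fun r : ℝ => r • u) atTop (cocompact E) := by
    rw [← cobounded_eq_cocompact, ← tendsto_norm_atTop_iff_cobounded]
    exact tendsto_id.congr' ((eventually_ge_atTop 0).mono fun r hr => (norm_ray hr).symm)
  exact
    { continuousOn := ray_contDiff.continuous.continuousOn.congr ray_eq
      contDiffOn := ray_contDiff.contDiffOn.congr (ray_eq.mono Ioi_subset_Ici_self)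
      nonneg := fun r hr => ray_eq hr ▸ hV₀_nonneg (r • u)
      tendsto_zero := (hV₀_zero.comp ray_tendsto).congr'
        ((eventually_ge_atTop 0).mono fun r hr => (ray_eq hr).symm)
      deriv_ne_zero := fun r hr hRr h => (hR' r hr.le h).elim hr.ne' hRr }

-- Running through `R` slightly too fast makes the derivative inequality strict.
theorem apply_mul_add_le_of_deriv_le {φ φ' : ℝ → ℝ}
    (hφ : ∀ s, 0 ≤ s → HasDerivAt φ (φ' s) s) (h0 : R 0 ≤ φ 0)
    (hφ' : ∀ s p, 0 ≤ s → 0 < p → 0 < R p → φ s = R p → deriv R p ≤ φ' s)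
    {δ : ℝ} (hδ : 0 < δ) (hr : 0 ≤ r) (hRr : 0 < R ((1 + δ) * r + δ)) :
    R ((1 + δ) * r + δ) ≤ φ r := by
  have arg_pos {s : ℝ} (hs : 0 ≤ s) : 0 < (1 + δ) * s + δ := by positivity
  have hderiv {s : ℝ} (hs : 0 ≤ s) : HasDerivAt (fun s => R ((1 + δ) * s + δ))
      (deriv R ((1 + δ) * s + δ) * (1 + δ)) s := by
    have inner : HasDerivAt (fun s => (1 + δ) * s + δ) (1 + δ) s := by
      simpa using ((hasDerivAt_id s).const_mul (1 + δ)).add_const δ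
    exact (hR.differentiableAt (arg_pos hs)).hasDerivAt.comp s inner
  refine image_le_of_deriv_right_lt_deriv_boundary' (a := 0) (b := r)
    (fun s hs => (hderiv hs.1).continuousAt.continuousWithinAt)
    (fun s hs => (hderiv hs.1).hasDerivWithinAt)
    ((hR.apply_le_apply_zero (arg_pos le_rfl).le).trans h0)
    (fun s hs => (hφ s hs.1).continuousAt.continuousWithinAt)
    (fun s hs => (hφ s hs.1).hasDerivWithinAt) (fun s hs heq => ?_) ⟨hr, le_rfl⟩
  have hRs : 0 < R ((1 + δ) * s + δ) := hRr.trans_le <|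
    hR.antitoneOn (arg_pos hs.1).le (arg_pos hr).le (by gcongr; exact hs.2.le)
  have hneg := hR.deriv_neg (arg_pos hs.1) hRs
  calc deriv R ((1 + δ) * s + δ) * (1 + δ) < deriv R ((1 + δ) * s + δ) := by nlinarith
    _ ≤ φ' s := hφ' s _ hs.1 (arg_pos hs.1) hRs heq.symm

theorem le_of_deriv_le {φ φ' : ℝ → ℝ} (hφ : ∀ s, 0 ≤ s → HasDerivAt φ (φ' s) s)
    (h0 : R 0 ≤ φ 0) (hφ_nonneg : 0 ≤ φ r)
    (hφ' : ∀ s p, 0 ≤ s → 0 < p → 0 < R p → φ s = R p → deriv R p ≤ φ' s) (hr : 0 ≤ r) :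
    R r ≤ φ r := by
  rcases (hR.nonneg r hr).eq_or_lt with hR0 | hRpos
  · exact hR0 ▸ hφ_nonneg
  have hcont : ContinuousWithinAt (fun δ => R ((1 + δ) * r + δ)) (Ioi 0) 0 := by
    refine ContinuousWithinAt.comp (t := Ici 0) (hR.continuousOn _ ?_) (by fun_prop) fun δ hδ => ?_
    · simpa using hr
    · have : 0 < δ := hδ
      exact mem_Ici.2 (by positivity)
  have hlim : Tendsto (fun δ => R ((1 + δ) * r + δ)) (𝓝[>] 0) (𝓝 (R r)) := by
    simpa using hcont.tendsto
  refine le_of_tendsto hlim ?_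
  filter_upwards [hlim.eventually_const_lt hRpos, self_mem_nhdsWithin] with δ hδR hδ
  exact hR.apply_mul_add_le_of_deriv_le hφ h0 hφ' hδ hr hδR

end IsRadialProfile

end Profile

section BallSup

/-- The supremum of `F` over the closed ball of radius `ε` about `x`. Its superlevel sets are the
`ε`-thickenings of those of `F`, and its first variation in `ε` is the norm of the gradient. -/
noncomputable def ballSup {E : Type*} [PseudoMetricSpace E] (F : E → ℝ) (ε : ℝ) (x : E) : ℝ :=
  sSup (F '' closedBall x ε)

section Metric

variable {E : Type*} [PseudoMetricSpace E] [ProperSpace E] {F : E → ℝ} {ε t : ℝ} {x y : E}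

theorem le_ballSup (hF : Continuous F) (hy : y ∈ closedBall x ε) : F y ≤ ballSup F ε x :=
  le_csSup ((isCompact_closedBall x ε).image hF).bddAbove (mem_image_of_mem F hy)

theorem exists_eq_ballSup (hF : Continuous F) (hε : 0 ≤ ε) (x : E) :
    ∃ y ∈ closedBall x ε, F y = ballSup F ε x :=
  ((isCompact_closedBall x ε).image hF).sSup_mem ((nonempty_closedBall.2 hε).image F)

theorem lt_ballSup_iff (hF : Continuous F) (hε : 0 ≤ ε) :
    t < ballSup F ε x ↔ ∃ y ∈ closedBall x ε, t < F y := by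
  constructor
  · intro ht
    obtain ⟨y, hy, heq⟩ := exists_eq_ballSup hF hε x
    exact ⟨y, hy, heq ▸ ht⟩
  · rintro ⟨y, hy, ht⟩
    exact ht.trans_le (le_ballSup hF hy)

theorem self_le_ballSup (hF : Continuous F) (hε : 0 ≤ ε) (x : E) : F x ≤ ballSup F ε x :=
  le_ballSup hF (mem_closedBall_self hε)

theorem abs_ballSup_sub_le {L : NNReal} (hF : LipschitzWith L F) (hε : 0 ≤ ε) (x : E) :
    |ballSup F ε x - F x| ≤ L * ε := by
  obtain ⟨y, hy, heq⟩ := exists_eq_ballSup hF.continuous hε x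
  calc |ballSup F ε x - F x| = dist (F y) (F x) := by rw [heq, Real.dist_eq]
    _ ≤ L * dist y x := hF.dist_le_mul y x
    _ ≤ L * ε := by gcongr; exact hy

theorem ballSup_eq_zero_of_notMem_cthickening (hF : Continuous F) (hε : 0 ≤ ε)
    (hx : x ∉ cthickening ε (tsupport F)) : ballSup F ε x = 0 := by
  obtain ⟨y, hy, heq⟩ := exists_eq_ballSup hF hε x
  rw [← heq]
  refine image_eq_zero_of_notMem_tsupport fun hyF => hx ?_
  exact mem_cthickening_of_dist_le x y ε _ hyF (dist_comm y x ▸ hy)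

theorem norm_inv_mul_ballSup_sub_le {L : NNReal} (hF : LipschitzWith L F)
    (hε : ε ∈ Ioc 0 1) (x : E) :
    ‖ε⁻¹ * (ballSup F ε x - F x)‖ ≤
      (cthickening 1 (tsupport F)).indicator (fun _ => (L : ℝ)) x := by
  by_cases hx : x ∈ cthickening 1 (tsupport F)
  · rw [indicator_of_mem hx, norm_mul, Real.norm_of_nonneg (inv_nonneg.2 hε.1.le),
      inv_mul_le_iff₀ hε.1, mul_comm]
    exact abs_ballSup_sub_le hF hε.1.le x
  · have hball : ballSup F ε x = 0 := ballSup_eq_zero_of_notMem_cthickening hF.continuous hε.1.le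
      fun h => hx (cthickening_mono hε.2 _ h)
    have hFx : F x = 0 := image_eq_zero_of_notMem_tsupport fun h =>
      hx (self_subset_cthickening _ h)
    simp [hball, hFx, hx]

end Metric

section Normed

variable {E : Type*} [NormedAddCommGroup E] [ProperSpace E] {F : E → ℝ} {ε : ℝ}

theorem superlevel_ballSup (hF : Continuous F) (hε : 0 ≤ ε) (t : ℝ) :
    {x | t < ballSup F ε x} = {x | t < F x} + closedBall 0 ε := by
  ext x
  rw [mem_ofPred_eq, lt_ballSup_iff hF hε, Set.mem_add]
  constructor
  · rintro ⟨y, hy, ht⟩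
    exact ⟨y, ht, x - y, by simpa [dist_comm, dist_eq_norm] using hy, by abel⟩
  · rintro ⟨y, ht, z, hz, rfl⟩
    exact ⟨y, by simpa [dist_eq_norm] using hz, ht⟩

theorem isOpen_superlevel_ballSup (hF : Continuous F) (hε : 0 ≤ ε) (t : ℝ) :
    IsOpen {x | t < ballSup F ε x} := by
  rw [superlevel_ballSup hF hε]
  exact (isOpen_lt continuous_const hF).add_right

theorem measurable_ballSup [MeasurableSpace E] [BorelSpace E] (hF : Continuous F) (hε : 0 ≤ ε) :
    Measurable (ballSup F ε) :=
  measurable_of_Ioi fun t => (isOpen_superlevel_ballSup hF hε t).measurableSet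

end Normed

section InnerProduct

variable {E : Type*} [NormedAddCommGroup E] [InnerProductSpace ℝ E]

theorem exists_norm_le_apply_eq_mul_norm [CompleteSpace E] (φ : E →L[ℝ] ℝ) {ε : ℝ} (hε : 0 ≤ ε) :
    ∃ v, ‖v‖ ≤ ε ∧ φ v = ε * ‖φ‖ := by
  set u := (InnerProductSpace.toDual ℝ E).symm φ
  have hφ_apply (v : E) : φ v = inner ℝ u v := (InnerProductSpace.toDual_symm_apply).symm
  have hu_norm : ‖u‖ = ‖φ‖ := LinearIsometryEquiv.norm_map _ _
  rcases eq_or_ne ‖φ‖ 0 with h0 | h0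
  · exact ⟨0, by simpa using hε, by simp [h0]⟩
  · refine ⟨(ε * ‖φ‖⁻¹) • u, ?_, ?_⟩
    · rw [norm_smul, hu_norm, Real.norm_of_nonneg (by positivity), inv_mul_cancel_right₀ h0]
    · rw [hφ_apply, real_inner_smul_right, real_inner_self_eq_norm_sq, hu_norm]
      field_simp

variable [FiniteDimensional ℝ E] {F F₀ : E → ℝ}

theorem abs_ballSup_sub_sub_le (hF : Continuous F) (φ : E →L[ℝ] ℝ) {x : E} {ε c : ℝ} (hε : 0 ≤ ε)
    (hφ : ∀ v, ‖v‖ ≤ ε → |F (x + v) - F x - φ v| ≤ c) :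
    |ballSup F ε x - F x - ε * ‖φ‖| ≤ c := by
  have upper : ballSup F ε x - F x - ε * ‖φ‖ ≤ c := by
    obtain ⟨y, hy, heq⟩ := exists_eq_ballSup hF hε x
    rw [mem_closedBall, dist_eq_norm] at hy
    have hlin := (abs_le.1 (hφ _ hy)).2
    have hop := (le_abs_self _).trans (φ.le_of_opNorm_le_of_le le_rfl hy)
    rw [add_sub_cancel] at hlin
    linarith
  have lower : -c ≤ ballSup F ε x - F x - ε * ‖φ‖ := by
    obtain ⟨v, hv, hφv⟩ := exists_norm_le_apply_eq_mul_norm φ hε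
    have hlin := (abs_le.1 (hφ v hv)).1
    have hle : F (x + v) ≤ ballSup F ε x := le_ballSup hF (by simpa [dist_eq_norm] using hv)
    linarith
  exact abs_le.2 ⟨lower, upper⟩

theorem tendsto_ballSup_slope (hF : Continuous F) {x : E} (hFx : DifferentiableAt ℝ F x) :
    Tendsto (fun ε => ε⁻¹ * (ballSup F ε x - F x)) (𝓝[>] 0) (𝓝 ‖fderiv ℝ F x‖) := by
  refine Metric.tendsto_nhds.2 fun c hc => ?_
  obtain ⟨δ, hδ, hlin⟩ := Metric.eventually_nhds_iff.1 <|
    (hasFDerivAt_iff_isLittleO_nhds_zero.1 hFx.hasFDerivAt).def (half_pos hc)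
  filter_upwards [Ioo_mem_nhdsGT hδ] with ε hε
  have hεpos : 0 < ε := hε.1
  have linearization (v : E) (hv : ‖v‖ ≤ ε) :
      |F (x + v) - F x - fderiv ℝ F x v| ≤ c / 2 * ε := by
    refine (hlin (by simpa using hv.trans_lt hε.2)).trans ?_
    gcongr
  calc |ε⁻¹ * (ballSup F ε x - F x) - ‖fderiv ℝ F x‖|
      = |ε⁻¹ * (ballSup F ε x - F x - ε * ‖fderiv ℝ F x‖)| := by
        rw [mul_sub ε⁻¹ (ballSup F ε x - F x), inv_mul_cancel_left₀ hεpos.ne']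
    _ = ε⁻¹ * |ballSup F ε x - F x - ε * ‖fderiv ℝ F x‖| := by
        rw [abs_mul, abs_of_pos (inv_pos.2 hεpos)]
    _ ≤ ε⁻¹ * (c / 2 * ε) := by
        gcongr
        exact abs_ballSup_sub_sub_le hF _ hεpos.le linearization
    _ < c := by rw [mul_comm, mul_inv_cancel_right₀ hεpos.ne']; linarith

variable [MeasurableSpace E] [BorelSpace E]

theorem integrable_indicator_cthickening_tsupport (hF : HasCompactSupport F) (δ L : ℝ) :
    Integrable ((cthickening δ (tsupport F)).indicator fun _ => L) :=
  (integrable_indicator_iff isClosed_cthickening.measurableSet).2 <|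
    integrableOn_const (hF.isCompact.cthickening).measure_lt_top.ne

theorem integrable_ballSup {L : NNReal} (hF : LipschitzWith L F) (hFc : HasCompactSupport F)
    {ε : ℝ} (hε : ε ∈ Ioc 0 1) : Integrable (ballSup F ε) := by
  have hF_int : Integrable F := hF.continuous.integrable_of_hasCompactSupport hFc
  have hmeas : Measurable fun x => ε⁻¹ * (ballSup F ε x - F x) :=
    ((measurable_ballSup hF.continuous hε.1.le).sub hF.continuous.measurable).const_mul _
  have slope_integrable : Integrable fun x => ε⁻¹ * (ballSup F ε x - F x) :=
    (integrable_indicator_cthickening_tsupport hFc 1 L).mono' hmeas.aestronglyMeasurable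
      (.of_forall (norm_inv_mul_ballSup_sub_le hF hε))
  refine ((slope_integrable.const_mul ε).add hF_int).congr (.of_forall fun x => ?_)
  rw [Pi.add_apply, mul_inv_cancel_left₀ hε.1.ne', sub_add_cancel]

theorem tendsto_integral_ballSup_slope (hF : ContDiff ℝ 1 F) (hFc : HasCompactSupport F) :
    Tendsto (fun ε => ε⁻¹ * ((∫ x, ballSup F ε x) - ∫ x, F x)) (𝓝[>] 0)
      (𝓝 (∫ x, ‖fderiv ℝ F x‖)) := by
  obtain ⟨L, hL⟩ := hF.lipschitzWith_of_hasCompactSupport hFc one_ne_zero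
  have near_zero : Ioc (0 : ℝ) 1 ∈ 𝓝[>] 0 := Ioc_mem_nhdsGT one_pos
  have slope_tendsto : Tendsto (fun ε => ∫ x, ε⁻¹ * (ballSup F ε x - F x)) (𝓝[>] 0)
      (𝓝 (∫ x, ‖fderiv ℝ F x‖)) := by
    refine tendsto_integral_filter_of_dominated_convergence _ ?_ ?_
      (integrable_indicator_cthickening_tsupport hFc 1 L) (.of_forall fun x =>
        tendsto_ballSup_slope hF.continuous (hF.differentiable one_ne_zero x))
    · filter_upwards [near_zero] with ε hε
      exact (((measurable_ballSup hF.continuous hε.1.le).sub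
        hF.continuous.measurable).const_mul _).aestronglyMeasurable
    · filter_upwards [near_zero] with ε hε
      exact .of_forall (norm_inv_mul_ballSup_sub_le hL hε)
  refine slope_tendsto.congr' ?_
  filter_upwards [near_zero] with ε hε
  rw [integral_const_mul, integral_sub (integrable_ballSup hL hFc hε)
    (hF.continuous.integrable_of_hasCompactSupport hFc)]

theorem volume_superlevel_ballSup_le (hF : Continuous F) (hF₀ : Continuous F₀) {ε t : ℝ}
    (hε : 0 < ε) (hvol : volume {x | t < F x} = volume {x | t < F₀ x})
    (hball : ∃ ρ, {x | t < F₀ x} = ball 0 ρ) :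
    volume {x | t < ballSup F₀ ε x} ≤ volume {x | t < ballSup F ε x} := by
  obtain ⟨ρ, hρ⟩ := hball
  rw [superlevel_ballSup hF₀ hε.le, hρ]
  rcases le_or_gt ρ 0 with hρ0 | hρ0
  · simp [ball_eq_empty.2 hρ0]
  · rw [ball_add_closedBall hρ0 hε.le, add_zero]
    refine volume_ball_add_le (isOpen_lt continuous_const hF).measurableSet
      (isOpen_superlevel_ballSup hF hε.le t).measurableSet hρ0 hε (hρ ▸ hvol) ?_
    rw [superlevel_ballSup hF hε.le]
    exact add_subset_add_left ball_subset_closedBall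

theorem integral_ballSup_le_of_superlevel_eq_ball (hF : Continuous F) (hF₀ : Continuous F₀)
    (hF_nonneg : ∀ x, 0 ≤ F x) (hF₀_nonneg : ∀ x, 0 ≤ F₀ x) {ε : ℝ} (hε : 0 < ε)
    (hF_int : Integrable (ballSup F ε))
    (hvol : ∀ t > 0, volume {x | t < F x} = volume {x | t < F₀ x})
    (hball : ∀ t > 0, ∃ ρ, {x | t < F₀ x} = ball 0 ρ) :
    ∫ x, ballSup F₀ ε x ≤ ∫ x, ballSup F ε x := by
  have nonneg {H : E → ℝ} (hH : Continuous H) (hH0 : ∀ x, 0 ≤ H x) :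
      0 ≤ᵐ[volume] ballSup H ε :=
    .of_forall fun x => (hH0 x).trans (self_le_ballSup hH hε.le x)
  have layer_cake {H : E → ℝ} (hH : Continuous H) (hH0 : ∀ x, 0 ≤ H x) :=
    lintegral_eq_lintegral_meas_lt volume (nonneg hH hH0) (measurable_ballSup hH hε.le).aemeasurable
  rw [integral_eq_lintegral_of_nonneg_ae (nonneg hF₀ hF₀_nonneg)
      (measurable_ballSup hF₀ hε.le).aestronglyMeasurable,
    integral_eq_lintegral_of_nonneg_ae (nonneg hF hF_nonneg)
      (measurable_ballSup hF hε.le).aestronglyMeasurable]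
  refine ENNReal.toReal_mono hF_int.lintegral_lt_top.ne ?_
  rw [layer_cake hF hF_nonneg, layer_cake hF₀ hF₀_nonneg]
  exact setLIntegral_mono' measurableSet_Ioi fun t ht =>
    volume_superlevel_ballSup_le hF hF₀ hε (hvol t ht) (hball t ht)

theorem integral_eq_of_meas_superlevel_eq {α β : Type*} [MeasurableSpace α] [MeasurableSpace β]
    {μ : Measure α} {ν : Measure β} {f : α → ℝ} {g : β → ℝ} (hf : Measurable f) (hg : Measurable g)
    (hf_nonneg : ∀ x, 0 ≤ f x) (hg_nonneg : ∀ x, 0 ≤ g x)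
    (h : ∀ t > 0, μ {x | t < f x} = ν {x | t < g x}) : ∫ x, f x ∂μ = ∫ x, g x ∂ν := by
  rw [integral_eq_lintegral_of_nonneg_ae (.of_forall hf_nonneg) hf.aestronglyMeasurable,
    integral_eq_lintegral_of_nonneg_ae (.of_forall hg_nonneg) hg.aestronglyMeasurable,
    lintegral_eq_lintegral_meas_lt μ (.of_forall hf_nonneg) hf.aemeasurable,
    lintegral_eq_lintegral_meas_lt ν (.of_forall hg_nonneg) hg.aemeasurable]
  exact congrArg _ (setLIntegral_congr_fun measurableSet_Ioi h)

theorem integral_norm_fderiv_le_of_superlevel_eq_ball (hF : ContDiff ℝ 1 F) (hF₀ : ContDiff ℝ 1 F₀)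
    (hFc : HasCompactSupport F) (hF₀c : HasCompactSupport F₀)
    (hF_nonneg : ∀ x, 0 ≤ F x) (hF₀_nonneg : ∀ x, 0 ≤ F₀ x)
    (hvol : ∀ t > 0, volume {x | t < F x} = volume {x | t < F₀ x})
    (hball : ∀ t > 0, ∃ ρ, {x | t < F₀ x} = ball 0 ρ) :
    ∫ x, ‖fderiv ℝ F₀ x‖ ≤ ∫ x, ‖fderiv ℝ F x‖ := by
  obtain ⟨L, hL⟩ := hF.lipschitzWith_of_hasCompactSupport hFc one_ne_zero
  refine le_of_tendsto_of_tendsto (tendsto_integral_ballSup_slope hF₀ hF₀c)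
    (tendsto_integral_ballSup_slope hF hFc) ?_
  filter_upwards [Ioc_mem_nhdsGT one_pos] with ε hε
  have hεpos : 0 < ε := hε.1
  rw [integral_eq_of_meas_superlevel_eq hF.continuous.measurable hF₀.continuous.measurable
    hF_nonneg hF₀_nonneg hvol]
  refine mul_le_mul_of_nonneg_left (sub_le_sub_right ?_ _) (inv_nonneg.2 hεpos.le)
  exact integral_ballSup_le_of_superlevel_eq_ball hF.continuous hF₀.continuous hF_nonneg hF₀_nonneg
    hεpos (integrable_ballSup hL hFc hε) hvol hball

end InnerProduct

end BallSup

section WeightedPolyaSzego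

theorem isCompact_superlevel {X : Type*} [TopologicalSpace X] {V : X → ℝ} (hV : Continuous V)
    (hV_zero : Tendsto V (cocompact X) (𝓝 0)) {c : ℝ} (hc : 0 < c) : IsCompact {x | c ≤ V x} := by
  obtain ⟨K, hK, hKc⟩ := mem_cocompact.1 (hV_zero.eventually_lt_const hc)
  refine hK.of_isClosed_subset (isClosed_le continuous_const hV) fun x hx => ?_
  by_contra hxK
  exact (show V x < c from hKc hxK).not_ge hx

theorem exists_superlevel_comp_eq {G : ℝ → ℝ} (hG : Continuous G) (hG_mono : Monotone G) {c s : ℝ}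
    (hGc : G c = 0) (hs : 0 < s) : (∀ u, G u ≤ s) ∨ ∃ t ≥ c, ∀ u, s < G u ↔ t < u := by
  refine or_iff_not_imp_left.2 fun hbdd => ?_
  obtain ⟨v, hv⟩ := not_forall.1 hbdd
  have bddAbove : BddAbove {u | G u ≤ s} :=
    ⟨v, fun u hu => le_of_not_gt fun hvu => hv ((hG_mono hvu.le).trans hu)⟩
  have c_mem : c ∈ {u | G u ≤ s} := hGc.trans_le hs.le
  have sSup_mem := (isClosed_le hG continuous_const).csSup_mem ⟨c, c_mem⟩ bddAbove
  refine ⟨sSup {u | G u ≤ s}, le_csSup bddAbove c_mem, fun u => ⟨fun hu => ?_, fun hu => ?_⟩⟩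
  · by_contra! hle
    exact hu.not_ge ((hG_mono hle).trans sSup_mem)
  · by_contra! hle
    exact hu.not_ge (le_csSup bddAbove hle)

theorem exists_monotone_hasDerivAt {g : ℝ → ℝ} (hg : Continuous g) (hg_nonneg : ∀ t, 0 ≤ g t)
    {c : ℝ} (hgc : ∀ t ≤ c, g t = 0) :
    ∃ G : ℝ → ℝ, (∀ t, HasDerivAt G (g t) t) ∧ Monotone G ∧ ∀ t ≤ c, G t = 0 := by
  have hderiv (t : ℝ) : HasDerivAt (fun t => ∫ s in c..t, g s) (g t) t :=
    (hg.integral_hasStrictDerivAt c t).hasDerivAt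
  refine ⟨fun t => ∫ s in c..t, g s, hderiv, ?_, fun t ht => ?_⟩
  · exact monotone_of_deriv_nonneg (fun t => (hderiv t).differentiableAt)
      fun t => (hderiv t).deriv ▸ hg_nonneg t
  · refine intervalIntegral.integral_zero_ae (.of_forall fun s hs => hgc s ?_)
    rw [uIoc_of_ge ht] at hs
    exact hs.2

theorem hasCompactSupport_comp_mul {X : Type*} [TopologicalSpace X] [R1Space X]
    {V w : X → ℝ} (hV : Continuous V) (hV_zero : Tendsto V (cocompact X) (𝓝 0)) {g : ℝ → ℝ}
    {c : ℝ} (hc : 0 < c) (hgc : ∀ t ≤ c, g t = 0) :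
    HasCompactSupport fun x => g (V x) * w x := by
  refine .of_support_subset_isCompact (isCompact_superlevel hV hV_zero hc) fun x hx => ?_
  by_contra hlt
  exact hx (mul_eq_zero_of_left (hgc _ (not_le.1 hlt).le) _)

theorem integral_sq_comp_mul_sub {X : Type*} [TopologicalSpace X] [R1Space X] [MeasurableSpace X]
    [OpensMeasurableSpace X] {μ : Measure X} [IsFiniteMeasureOnCompacts μ] {V w : X → ℝ}
    (hV : Continuous V) (hV_zero : Tendsto V (cocompact X) (𝓝 0)) (hw : Continuous w)
    {ψ p : ℝ → ℝ} (hψ : Continuous ψ) (hp : Continuous p) {c : ℝ} (hc : 0 < c)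
    (hψc : ∀ t ≤ c, ψ t = 0) (hpc : ∀ t ≤ c, p t = 0) :
    ∫ x, (ψ (V x) * w x - p (V x)) ^ 2 ∂μ = (∫ x, ψ (V x) ^ 2 * w x ^ 2 ∂μ)
      - 2 * (∫ x, ψ (V x) * p (V x) * w x ∂μ) + ∫ x, p (V x) ^ 2 * 1 ∂μ := by
  have integrable {f : ℝ → ℝ} {v : X → ℝ} (hf : Continuous f) (hv : Continuous v)
      (hfc : ∀ t ≤ c, f t = 0) : Integrable (fun x => f (V x) * v x) μ :=
    ((hf.comp hV).mul hv).integrable_of_hasCompactSupport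
      (hasCompactSupport_comp_mul hV hV_zero hc hfc)
  have square_integrable : Integrable (fun x => ψ (V x) ^ 2 * w x ^ 2) μ :=
    integrable (f := fun t => ψ t ^ 2) (hψ.pow 2) (hw.pow 2) fun t ht => by simp [hψc t ht]
  have cross_integrable : Integrable (fun x => 2 * (ψ (V x) * p (V x) * w x)) μ :=
    (integrable (hψ.mul hp) hw fun t ht => by simp [hψc t ht]).const_mul 2
  have constant_integrable : Integrable (fun x => p (V x) ^ 2 * 1) μ :=
    integrable (f := fun t => p t ^ 2) (hp.pow 2) continuous_const fun t ht => by simp [hpc t ht]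
  have difference_integrable : Integrable
      (fun x => ψ (V x) ^ 2 * w x ^ 2 - 2 * (ψ (V x) * p (V x) * w x)) μ :=
    square_integrable.sub cross_integrable
  rw [← integral_const_mul, ← integral_sub square_integrable cross_integrable,
    ← integral_add difference_integrable constant_integrable]
  exact integral_congr_ae (.of_forall fun x => by ring)

variable {E : Type*} [NormedAddCommGroup E] [InnerProductSpace ℝ E] [FiniteDimensional ℝ E]
  [MeasurableSpace E] [BorelSpace E] {V V₀ : E → ℝ} (hV : ContDiff ℝ 1 V) (hV₀ : ContDiff ℝ 1 V₀)
  (hV_zero : Tendsto V (cocompact E) (𝓝 0)) (hV₀_zero : Tendsto V₀ (cocompact E) (𝓝 0))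

include hV hV₀ hV_zero hV₀_zero

theorem integral_comp_mul_norm_fderiv_le_of_superlevel_eq_ball
    (hvol : ∀ t > 0, volume {x | t < V x} = volume {x | t < V₀ x})
    (hball : ∀ t > 0, ∃ ρ, {x | t < V₀ x} = ball 0 ρ)
    {g : ℝ → ℝ} (hg : Continuous g) (hg_nonneg : ∀ t, 0 ≤ g t) {c : ℝ} (hc : 0 < c)
    (hgc : ∀ t ≤ c, g t = 0) :
    ∫ x, g (V₀ x) * ‖fderiv ℝ V₀ x‖ ≤ ∫ x, g (V x) * ‖fderiv ℝ V x‖ := by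
  obtain ⟨G, hG_deriv, hG_mono, hGc⟩ := exists_monotone_hasDerivAt hg hg_nonneg hgc
  have hG : ContDiff ℝ 1 G := contDiff_one_iff_deriv.2
    ⟨fun t => (hG_deriv t).differentiableAt, by rwa [funext fun t => (hG_deriv t).deriv]⟩
  have hG_nonneg (t : ℝ) : 0 ≤ G t := by
    rcases le_total t c with ht | ht
    · exact (hGc t ht).ge
    · exact (hGc c le_rfl).ge.trans (hG_mono ht)
  have chain {W : E → ℝ} (hW : ContDiff ℝ 1 W) (x : E) :
      ‖fderiv ℝ (G ∘ W) x‖ = g (W x) * ‖fderiv ℝ W x‖ := by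
    rw [((hG_deriv (W x)).comp_hasFDerivAt x
      (hW.differentiable one_ne_zero x).hasFDerivAt).fderiv, norm_smul,
      Real.norm_of_nonneg (hg_nonneg _)]
  have compactSupport {W : E → ℝ} (hW : ContDiff ℝ 1 W) (hW_zero : Tendsto W (cocompact E) (𝓝 0)) :
      HasCompactSupport (G ∘ W) := by
    simpa [Function.comp_def] using
      hasCompactSupport_comp_mul (w := 1) hW.continuous hW_zero hc hGc
  simp only [← chain hV, ← chain hV₀]
  refine integral_norm_fderiv_le_of_superlevel_eq_ball (hG.comp hV) (hG.comp hV₀)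
    (compactSupport hV hV_zero) (compactSupport hV₀ hV₀_zero) (fun _ => hG_nonneg _)
    (fun _ => hG_nonneg _) (fun s hs => ?_) (fun s hs => ?_)
  all_goals rcases exists_superlevel_comp_eq hG.continuous hG_mono (hGc c le_rfl) hs
      with hle | ⟨t, htc, ht⟩
  · simp [(hle _).not_gt]
  · simpa [ht] using hvol t (hc.trans_le htc)
  · exact ⟨0, by simp [(hle _).not_gt]⟩
  · simpa [ht] using hball t (hc.trans_le htc)

theorem integral_sq_comp_mul_norm_fderiv_sub_le
    (hdist : positiveDistribution volume V 1 = positiveDistribution volume V₀ 1)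
    (hgrad : positiveDistribution volume V (fun x => ‖fderiv ℝ V x‖ ^ 2) =
      positiveDistribution volume V₀ fun x => ‖fderiv ℝ V₀ x‖ ^ 2)
    (hball : ∀ t > 0, ∃ ρ, {x | t < V₀ x} = ball 0 ρ)
    {ψ p : ℝ → ℝ} (hψ : Continuous ψ) (hp : Continuous p) (hψ_nonneg : ∀ t, 0 ≤ ψ t)
    (hp_nonneg : ∀ t, 0 ≤ p t) {c : ℝ} (hc : 0 < c) (hψc : ∀ t ≤ c, ψ t = 0)
    (hpc : ∀ t ≤ c, p t = 0) :
    ∫ x, (ψ (V x) * ‖fderiv ℝ V x‖ - p (V x)) ^ 2 ≤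
      ∫ x, (ψ (V₀ x) * ‖fderiv ℝ V₀ x‖ - p (V₀ x)) ^ 2 := by
  have hV_meas : Measurable V := hV.continuous.measurable
  have hV₀_meas : Measurable V₀ := hV₀.continuous.measurable
  have hN : Continuous fun x => ‖fderiv ℝ V x‖ := (hV.continuous_fderiv one_ne_zero).norm
  have hN₀ : Continuous fun x => ‖fderiv ℝ V₀ x‖ := (hV₀.continuous_fderiv one_ne_zero).norm
  have square_eq : ∫ x, ψ (V x) ^ 2 * ‖fderiv ℝ V x‖ ^ 2 =
      ∫ x, ψ (V₀ x) ^ 2 * ‖fderiv ℝ V₀ x‖ ^ 2 :=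
    integral_comp_mul_eq_of_positiveDistribution_eq (f := fun t => ψ t ^ 2) hV_meas
      (hN.pow 2).measurable (fun _ => sq_nonneg _) hV₀_meas (hN₀.pow 2).measurable
      (fun _ => sq_nonneg _) hgrad (hψ.pow 2).measurable
      fun t ht => by simp [hψc t (ht.trans hc.le)]
  have constant_eq : ∫ x, p (V x) ^ 2 * 1 = ∫ x, p (V₀ x) ^ 2 * 1 :=
    integral_comp_mul_eq_of_positiveDistribution_eq (f := fun t => p t ^ 2) hV_meas
      measurable_one (fun _ => zero_le_one) hV₀_meas measurable_one (fun _ => zero_le_one) hdist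
      (hp.pow 2).measurable fun t ht => by simp [hpc t (ht.trans hc.le)]
  have hvol (t : ℝ) (ht : 0 < t) : volume {x | t < V x} = volume {x | t < V₀ x} := by
    rw [← positiveDistribution_one_Ioi hV_meas ht.le, hdist,
      positiveDistribution_one_Ioi hV₀_meas ht.le]
  have cross_le : ∫ x, ψ (V₀ x) * p (V₀ x) * ‖fderiv ℝ V₀ x‖ ≤
      ∫ x, ψ (V x) * p (V x) * ‖fderiv ℝ V x‖ :=
    integral_comp_mul_norm_fderiv_le_of_superlevel_eq_ball hV hV₀ hV_zero hV₀_zero hvol hball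
      (hψ.mul hp) (fun t => mul_nonneg (hψ_nonneg t) (hp_nonneg t)) hc
      fun t ht => by simp [hψc t ht]
  rw [integral_sq_comp_mul_sub hV.continuous hV_zero hN hψ hp hc hψc hpc,
    integral_sq_comp_mul_sub hV₀.continuous hV₀_zero hN₀ hψ hp hc hψc hpc, square_eq, constant_eq]
  linarith

theorem norm_fderiv_eq_levelSlope_of_positiveDistribution_eq
    (hdist : positiveDistribution volume V 1 = positiveDistribution volume V₀ 1)
    (hgrad : positiveDistribution volume V (fun x => ‖fderiv ℝ V x‖ ^ 2) =
      positiveDistribution volume V₀ fun x => ‖fderiv ℝ V₀ x‖ ^ 2)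
    {R : ℝ → ℝ} (hR : IsRadialProfile R) (hV₀R : ∀ x, V₀ x = R ‖x‖) {x : E}
    (hx : V x ∈ Ioo 0 (R 0)) : ‖fderiv ℝ V x‖ = levelSlope R (V x) := by
  obtain ⟨c, hc, hcx⟩ := exists_between hx.1
  obtain ⟨ψ, hψ_supp, -, hψ, hψ_range, hψx⟩ :=
    exists_contDiff_tsupport_subset (n := 0) (Ioo_mem_nhds hcx hx.2)
  have hψ_nonneg (t : ℝ) : 0 ≤ ψ t := (hψ_range (mem_range_self t)).1
  have hψ_zero {t : ℝ} (ht : t ∉ Ioo c (R 0)) : ψ t = 0 :=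
    image_eq_zero_of_notMem_tsupport fun h => ht (hψ_supp h)
  have hψc (t : ℝ) (ht : t ≤ c) : ψ t = 0 := hψ_zero fun h => h.1.not_ge ht
  have hpc (t : ℝ) (ht : t ≤ c) : ψ t * levelSlope R t = 0 := by rw [hψc t ht, zero_mul]
  have hp : Continuous fun t => ψ t * levelSlope R t := continuous_of_tsupport fun t ht => by
    have ht_mem : t ∈ Ioo c (R 0) := hψ_supp (tsupport_mul_subset_left ht)
    exact hψ.continuous.continuousAt.mul <|
      hR.continuousOn_levelSlope.continuousAt (Ioo_mem_nhds (hc.trans ht_mem.1) ht_mem.2)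
  have radial_defect (y : E) :
      (ψ (V₀ y) * ‖fderiv ℝ V₀ y‖ - ψ (V₀ y) * levelSlope R (V₀ y)) ^ 2 = 0 := by
    by_cases hy : V₀ y ∈ Ioo c (R 0)
    · rw [hR.norm_fderiv_eq_levelSlope hV₀R ⟨hc.trans hy.1, hy.2⟩]
      ring
    · rw [hψ_zero hy]
      ring
  have defect_le := integral_sq_comp_mul_norm_fderiv_sub_le hV hV₀ hV_zero hV₀_zero hdist hgrad
    (fun t ht => by simpa only [hV₀R] using hR.exists_superlevel_eq_ball ht) hψ.continuous hp
    hψ_nonneg (fun t => mul_nonneg (hψ_nonneg t) (abs_nonneg _)) hc hψc hpc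
  simp only [radial_defect, integral_zero] at defect_le
  have defect_continuous : Continuous fun y =>
      (ψ (V y) * ‖fderiv ℝ V y‖ - ψ (V y) * levelSlope R (V y)) ^ 2 :=
    (((hψ.continuous.comp hV.continuous).mul (hV.continuous_fderiv one_ne_zero).norm).sub
      (hp.comp hV.continuous)).pow 2
  have defect_compactSupport : HasCompactSupport fun y =>
      (ψ (V y) * ‖fderiv ℝ V y‖ - ψ (V y) * levelSlope R (V y)) ^ 2 := by
    simp only [← mul_sub, mul_pow]
    exact hasCompactSupport_comp_mul (g := fun t => ψ t ^ 2) hV.continuous hV_zero hc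
      fun t ht => by simp [hψc t ht]
  by_contra hne
  refine defect_le.not_gt (defect_continuous.integral_pos_of_hasCompactSupport_nonneg_nonzero
    (x := x) defect_compactSupport (fun y => sq_nonneg _) ?_)
  simpa [hψx, sub_eq_zero] using hne

end WeightedPolyaSzego

section Rigidity

theorem exists_le_apply_of_meas_superlevel_eq {X : Type*} [TopologicalSpace X] [MeasurableSpace X]
    {μ : Measure X} [μ.IsOpenPosMeasure] {V V₀ : X → ℝ} (hV : Continuous V)
    (hV_zero : Tendsto V (cocompact X) (𝓝 0)) (hV₀ : Continuous V₀)
    (hμ : ∀ t > 0, μ {x | t < V x} = μ {x | t < V₀ x}) {z : X} (hz : 0 < V₀ z) :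
    ∃ x, V₀ z ≤ V x := by
  by_contra! hlt
  have exceeds {t : ℝ} (ht : 0 < t) (htz : t < V₀ z) : ∃ x, t < V x := by
    refine nonempty_of_measure_ne_zero (μ := μ) (s := {x | t < V x}) ?_
    rw [hμ t ht]
    exact ((isOpen_lt continuous_const hV₀).measure_pos μ ⟨z, htz⟩).ne'
  obtain ⟨y, hy⟩ := exceeds (half_pos hz) (half_lt_self hz)
  obtain ⟨x₀, hx₀, hmax⟩ := (isCompact_superlevel hV hV_zero (half_pos hz)).exists_isMaxOn
    ⟨y, hy.le⟩ hV.continuousOn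
  have hx₀_pos : V₀ z / 2 ≤ V x₀ := hx₀
  obtain ⟨x, hx⟩ := exceeds ((half_pos hz).trans_le hx₀_pos) (hlt x₀)
  exact hx.not_ge (hmax (hx₀_pos.trans hx.le))

theorem eq_of_le_of_meas_superlevel_eq {X : Type*} [TopologicalSpace X] [MeasurableSpace X]
    [OpensMeasurableSpace X] {μ : Measure X} [μ.IsOpenPosMeasure] {f g : X → ℝ}
    (hf : Continuous f) (hg : Continuous g) (hf_nonneg : ∀ x, 0 ≤ f x) (hfg : ∀ x, f x ≤ g x)
    (hfin : ∀ t > 0, μ {x | t < f x} ≠ ∞) (hμ : ∀ t > 0, μ {x | t < f x} = μ {x | t < g x}) :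
    f = g := by
  ext x
  by_contra hne
  obtain ⟨t, hft, htg⟩ := exists_between ((hfg x).lt_of_ne hne)
  have ht : 0 < t := (hf_nonneg x).trans_lt hft
  have gap_null : μ ({x | t < g x} \ {x | t < f x}) = 0 := by
    have subset : {x | t < f x} ⊆ {x | t < g x} := fun y hy => lt_of_lt_of_le hy (hfg y)
    rw [measure_sdiff subset
      (isOpen_lt continuous_const hf).measurableSet.nullMeasurableSet (hfin t ht), hμ t ht,
      tsub_self]
  have gap_open : IsOpen ({y | f y < t} ∩ {y | t < g y}) :=
    (isOpen_lt hf continuous_const).inter (isOpen_lt continuous_const hg)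
  refine (gap_open.measure_pos μ ⟨x, hft, htg⟩).ne' (measure_mono_null ?_ gap_null)
  exact fun y hy => ⟨hy.2, fun h : t < f y => lt_asymm hy.1 h⟩

theorem IsRadialProfile.apply_norm_sub_le {E : Type*} [NormedAddCommGroup E] [NormedSpace ℝ E]
    {R : ℝ → ℝ} (hR : IsRadialProfile R) {V : E → ℝ} (hV : Differentiable ℝ V)
    (hV_nonneg : ∀ x, 0 ≤ V x)
    (hslope : ∀ x, V x ∈ Ioo 0 (R 0) → ‖fderiv ℝ V x‖ ≤ levelSlope R (V x))
    {x₀ : E} (hx₀ : R 0 ≤ V x₀) (x : E) : R ‖x - x₀‖ ≤ V x := by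
  rcases eq_or_ne x x₀ with rfl | hne
  · simpa using hx₀
  set r := ‖x - x₀‖
  have hr : 0 < r := norm_pos_iff.2 (sub_ne_zero.2 hne)
  set u := r⁻¹ • (x - x₀) with hu
  have hu_norm : ‖u‖ = 1 := norm_smul_inv_norm (𝕜 := ℝ) (sub_ne_zero.2 hne)
  have ray_deriv (s : ℝ) :
      HasDerivAt (fun s : ℝ => V (x₀ + s • u)) (fderiv ℝ V (x₀ + s • u) u) s := by
    have line_deriv : HasDerivAt (fun s : ℝ => x₀ + s • u) u s := by
      simpa using ((hasDerivAt_id s).smul_const u).const_add x₀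
    exact (hV _).hasFDerivAt.comp_hasDerivAt s line_deriv
  have hx : x₀ + r • u = x := by rw [hu, smul_inv_smul₀ hr.ne', add_sub_cancel]
  rw [← hx]
  refine hR.le_of_deriv_le (fun s _ => ray_deriv s) (by simpa using hx₀) (hV_nonneg _)
    (fun s p _ hp hRp heq => ?_) hr.le
  have hslope_s := hslope (x₀ + s • u) (heq ▸ hR.apply_mem_Ioo hp hRp)
  rw [heq, levelSlope, hR.levelRadius_apply hp hRp, abs_of_neg (hR.deriv_neg hp hRp)] at hslope_s
  have hop := (neg_abs_le _).trans' (neg_le_neg ((fderiv ℝ V (x₀ + s • u)).le_opNorm u))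
  rw [hu_norm, mul_one] at hop
  linarith

variable {E : Type*} [NormedAddCommGroup E] [InnerProductSpace ℝ E] [FiniteDimensional ℝ E]
  [MeasurableSpace E] [BorelSpace E] {V V₀ : E → ℝ}

theorem exists_eq_translate_of_positiveDistribution_eq (hV : ContDiff ℝ 1 V) (hV₀ : ContDiff ℝ 1 V₀)
    (hV_nonneg : ∀ x, 0 ≤ V x) (hV_zero : Tendsto V (cocompact E) (𝓝 0))
    (hV₀_zero : Tendsto V₀ (cocompact E) (𝓝 0)) {R : ℝ → ℝ} (hR : IsRadialProfile R)
    (hV₀R : ∀ x, V₀ x = R ‖x‖)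
    (hdist : positiveDistribution volume V 1 = positiveDistribution volume V₀ 1)
    (hgrad : positiveDistribution volume V (fun x => ‖fderiv ℝ V x‖ ^ 2) =
      positiveDistribution volume V₀ fun x => ‖fderiv ℝ V₀ x‖ ^ 2) :
    ∃ x₀, ∀ x, V x = V₀ (x - x₀) := by
  have hvol (t : ℝ) (ht : 0 < t) : volume {x | t < V x} = volume {x | t < V₀ x} := by
    rw [← positiveDistribution_one_Ioi hV.continuous.measurable ht.le, hdist,
      positiveDistribution_one_Ioi hV₀.continuous.measurable ht.le]
  have hV₀_nonneg (x : E) : 0 ≤ V₀ x := hV₀R x ▸ hR.nonneg _ (norm_nonneg x)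
  obtain ⟨x₀, hx₀⟩ : ∃ x₀, R 0 ≤ V x₀ := by
    rcases (hR.nonneg 0 le_rfl).eq_or_lt with hR0 | hR0
    · exact ⟨0, hR0 ▸ hV_nonneg 0⟩
    · have hV₀0 : V₀ 0 = R 0 := by rw [hV₀R, norm_zero]
      exact hV₀0 ▸ exists_le_apply_of_meas_superlevel_eq hV.continuous hV_zero hV₀.continuous hvol
        (hV₀0 ▸ hR0)
  have translate_le (x : E) : V₀ (x - x₀) ≤ V x := by
    rw [hV₀R]
    exact hR.apply_norm_sub_le (hV.differentiable one_ne_zero) hV_nonneg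
      (fun x hx => (norm_fderiv_eq_levelSlope_of_positiveDistribution_eq hV hV₀ hV_zero hV₀_zero
        hdist hgrad hR hV₀R hx).le) hx₀ x
  have translate_volume (t : ℝ) : volume {x | t < V₀ (x - x₀)} = volume {x | t < V₀ x} :=
    (measurePreserving_sub_right volume x₀).measure_preimage
      (isOpen_lt continuous_const hV₀.continuous).measurableSet.nullMeasurableSet
  have finite (t : ℝ) (ht : 0 < t) : volume {x | t < V₀ (x - x₀)} ≠ ∞ := by
    rw [translate_volume]
    exact measure_ne_top_of_subset (fun x (hx : t < V₀ x) => hx.le)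
      (isCompact_superlevel hV₀.continuous hV₀_zero ht).measure_ne_top
  have translate_eq := eq_of_le_of_meas_superlevel_eq
    (hV₀.continuous.comp (continuous_sub_right x₀)) hV.continuous (fun _ => hV₀_nonneg _)
    translate_le finite fun t ht => (translate_volume t).trans (hvol t ht).symm
  exact ⟨x₀, fun x => (congrFun translate_eq x).symm⟩

end Rigidity

theorem bddAbove_range_of_tendsto_cocompact {X : Type*} [TopologicalSpace X] {V : X → ℝ}
    (hV : Continuous V) (hV_zero : Tendsto V (cocompact X) (𝓝 0)) : BddAbove (range V) :=
  (ZeroAtInftyContinuousMap.isBounded_range ⟨⟨V, hV⟩, hV_zero⟩).bddAbove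

theorem norm_gradient_eq_norm_fderiv {F : Type*} [NormedAddCommGroup F]
    [InnerProductSpace ℝ F] [CompleteSpace F] (f : F → ℝ) (x : F) :
    ‖gradient f x‖ = ‖fderiv ℝ f x‖ :=
  LinearIsometryEquiv.norm_map _ _

theorem statement0_general {E : Type*} [NormedAddCommGroup E] [InnerProductSpace ℝ E]
    [FiniteDimensional ℝ E] [Nontrivial E] [MeasurableSpace E] [BorelSpace E] {V V₀ : E → ℝ}
    (hV : ContDiff ℝ 1 V) (hV₀ : ContDiff ℝ 1 V₀) (hV_nonneg : ∀ x, 0 ≤ V x)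
    (hV₀_nonneg : ∀ x, 0 ≤ V₀ x) (hV_zero : Tendsto V (cocompact E) (𝓝 0))
    (hV₀_zero : Tendsto V₀ (cocompact E) (𝓝 0)) {R : ℝ → ℝ} (hV₀R : ∀ x, V₀ x = R ‖x‖)
    (hR' : ∀ r, 0 ≤ r → deriv R r = 0 → r = 0 ∨ R r = 0) {m : ℕ}
    (hV_int : Integrable fun x => V x ^ m) (hV₀_int : Integrable fun x => V₀ x ^ m)
    (hV_grad : Integrable fun x => V x ^ m * ‖gradient V x‖ ^ 2)
    (hV₀_grad : Integrable fun x => V₀ x ^ m * ‖gradient V₀ x‖ ^ 2)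
    (hmom : ∀ k ≥ m, ∫ x, V x ^ k = ∫ x, V₀ x ^ k)
    (hmom_grad : ∀ k ≥ m,
      ∫ x, V x ^ k * ‖gradient V x‖ ^ 2 = ∫ x, V₀ x ^ k * ‖gradient V₀ x‖ ^ 2) :
    ∃ x₀, ∀ x, V x = V₀ (x - x₀) := by
  simp only [norm_gradient_eq_norm_fderiv] at hV_grad hV₀_grad hmom_grad
  have hR : IsRadialProfile R := .of_radial hV₀ hV₀_nonneg hV₀_zero hV₀R hR'
  have measurable_sq {W : E → ℝ} (hW : ContDiff ℝ 1 W) :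
      Measurable fun x => ‖fderiv ℝ W x‖ ^ 2 :=
    ((hW.continuous_fderiv one_ne_zero).norm.pow 2).measurable
  obtain ⟨A, hVA, hV₀A⟩ : ∃ A, (∀ x, V x ∈ Icc 0 A) ∧ ∀ x, V₀ x ∈ Icc 0 A := by
    obtain ⟨A, hA⟩ := bddAbove_range_of_tendsto_cocompact hV.continuous hV_zero
    obtain ⟨A₀, hA₀⟩ := bddAbove_range_of_tendsto_cocompact hV₀.continuous hV₀_zero
    exact ⟨max A A₀, fun x => ⟨hV_nonneg x, (hA (mem_range_self x)).trans (le_max_left _ _)⟩,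
      fun x => ⟨hV₀_nonneg x, (hA₀ (mem_range_self x)).trans (le_max_right _ _)⟩⟩
  refine exists_eq_translate_of_positiveDistribution_eq hV hV₀ hV_nonneg hV_zero hV₀_zero hR hV₀R
    ?_ ?_
  · exact positiveDistribution_eq_of_forall_integral_pow_eq hV.continuous.measurable
      measurable_one (fun _ => zero_le_one) hV₀.continuous.measurable measurable_one
      (fun _ => zero_le_one) hVA hV₀A (by simpa using hV_int) (by simpa using hV₀_int)
      (by simpa using hmom)
  · exact positiveDistribution_eq_of_forall_integral_pow_eq hV.continuous.measurable
      (measurable_sq hV) (fun _ => sq_nonneg _) hV₀.continuous.measurable (measurable_sq hV₀)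
      (fun _ => sq_nonneg _) hVA hV₀A hV_grad hV₀_grad hmom_grad

namespace SuperExpDecay

variable {n : ℕ} {W : EuclideanSpace ℝ (Fin n) → ℝ} (hW : SuperExpDecay W)

include hW

theorem exists_abs_le : ∃ C, ∀ x, |W x| ≤ C := by
  obtain ⟨C, hC⟩ := hW.2 0
  exact ⟨C, fun x => by simpa using hC x⟩

theorem exists_norm_fderiv_le : ∃ C, ∀ x, ‖fderiv ℝ W x‖ ≤ C := by
  obtain ⟨C, hC⟩ := hW.2 1
  exact ⟨C, fun x => by simpa only [norm_iteratedFDeriv_one] using hC x⟩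

theorem tendsto_zero : Tendsto W (cocompact _) (𝓝 0) := by
  obtain ⟨ε, A, B, hε, -, hB, hdecay⟩ := hW.1
  have exponent : Tendsto (fun x : EuclideanSpace ℝ (Fin n) => -B * ‖x‖ ^ (1 + ε))
      (cocompact _) atBot :=
    ((tendsto_rpow_atTop (add_pos one_pos hε)).comp
      tendsto_norm_cocompact_atTop).const_mul_atTop_of_neg (neg_neg_of_pos hB)
  refine squeeze_zero_norm hdecay ?_
  simpa using (tendsto_exp_atBot.comp exponent).const_mul A

theorem integrable [NeZero n] (hW_cont : Continuous W) : Integrable W := by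
  obtain ⟨ε, A, B, hε, -, hB, hdecay⟩ := hW.1
  have dominating : Integrable fun x : EuclideanSpace ℝ (Fin n) =>
      A * exp (-B * ‖x‖ ^ (1 + ε)) := by
    refine Integrable.const_mul ?_ A
    refine (integrable_fun_norm_addHaar volume (f := fun r => exp (-B * r ^ (1 + ε)))).2 ?_
    simpa only [← rpow_natCast, smul_eq_mul] using
      integrableOn_rpow_mul_exp_neg_mul_rpow (neg_one_lt_zero.trans_le (Nat.cast_nonneg _))
        (add_pos one_pos hε) hB
  exact dominating.mono' hW_cont.aestronglyMeasurable (.of_forall hdecay)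

theorem integrable_pow_mul [NeZero n] (hW_cont : Continuous W) {k : ℕ} (hk : k ≠ 0)
    {w : EuclideanSpace ℝ (Fin n) → ℝ} (hw : Continuous w) {C : ℝ} (hC : ∀ x, |w x| ≤ C) :
    Integrable fun x => W x ^ k * w x := by
  obtain ⟨j, rfl⟩ := Nat.exists_eq_succ_of_ne_zero hk
  obtain ⟨A, hA⟩ := hW.exists_abs_le
  have bounded (x : EuclideanSpace ℝ (Fin n)) : ‖W x ^ j * w x‖ ≤ A ^ j * C := by
    rw [norm_mul, norm_pow, norm_eq_abs, norm_eq_abs]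
    have := (abs_nonneg _).trans (hA x)
    gcongr
    exacts [hA x, hC x]
  refine ((hW.integrable hW_cont).bdd_mul ((hW_cont.pow j).mul hw).aestronglyMeasurable
    (.of_forall bounded)).congr (.of_forall fun x => ?_)
  simp only [Pi.mul_apply, Pi.pow_apply, pow_succ]
  ring

theorem integrable_pow [NeZero n] (hW_cont : Continuous W) {k : ℕ} (hk : k ≠ 0) :
    Integrable fun x => W x ^ k := by
  simpa using hW.integrable_pow_mul hW_cont hk continuous_one (C := 1) (by simp)

theorem integrable_pow_mul_norm_gradient_sq [NeZero n] (hW_diff : ContDiff ℝ 1 W) {k : ℕ}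
    (hk : k ≠ 0) : Integrable fun x => W x ^ k * ‖gradient W x‖ ^ 2 := by
  obtain ⟨C, hC⟩ := hW.exists_norm_fderiv_le
  simp only [norm_gradient_eq_norm_fderiv]
  refine hW.integrable_pow_mul hW_diff.continuous hk
    ((hW_diff.continuous_fderiv one_ne_zero).norm.pow 2) (C := C ^ 2) fun x => ?_
  rw [abs_of_nonneg (sq_nonneg _)]
  gcongr
  exact hC x

end SuperExpDecay

theorem statement0 (n : ℕ) (hn : 1 ≤ n)
    (V V₀ : EuclideanSpace ℝ (Fin n) → ℝ)
    (hV : ContDiff ℝ (⊤ : ℕ∞) V) (hV₀ : ContDiff ℝ (⊤ : ℕ∞) V₀)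
    (hVnn : ∀ x, 0 ≤ V x) (hV₀nn : ∀ x, 0 ≤ V₀ x)
    (hVdec : SuperExpDecay V) (hV₀dec : SuperExpDecay V₀)
    (R : ℝ → ℝ) (hR : ContDiffOn ℝ (⊤ : ℕ∞) R (Set.Ici 0))
    (hRnn : ∀ r, 0 ≤ r → 0 ≤ R r)
    (hV₀R : ∀ x, V₀ x = R ‖x‖)
    (hR' : ∀ r, 0 ≤ r → deriv R r = 0 → r = 0 ∨ R r = 0)
    (hmom : ∀ k : ℕ, n ≤ k →
      ∫ x, (V x) ^ k = ∫ x, (V₀ x) ^ k)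
    (hmom2 : ∀ k : ℕ, n ≤ k →
      ∫ x, (V x) ^ k * ‖gradient V x‖ ^ 2 = ∫ x, (V₀ x) ^ k * ‖gradient V₀ x‖ ^ 2) :
    ∃ x₀ : EuclideanSpace ℝ (Fin n), ∀ x, V x = V₀ (x - x₀) := by
  have : NeZero n := ⟨Nat.one_le_iff_ne_zero.1 hn⟩
  have hV_one : ContDiff ℝ 1 V := hV.of_le (by exact_mod_cast le_top)
  have hV₀_one : ContDiff ℝ 1 V₀ := hV₀.of_le (by exact_mod_cast le_top)
  exact statement0_general hV_one hV₀_one hVnn hV₀nn hVdec.tendsto_zero hV₀dec.tendsto_zero hV₀R hR'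
    (hVdec.integrable_pow hV_one.continuous (NeZero.ne n))
    (hV₀dec.integrable_pow hV₀_one.continuous (NeZero.ne n))
    (hVdec.integrable_pow_mul_norm_gradient_sq hV_one (NeZero.ne n))
    (hV₀dec.integrable_pow_mul_norm_gradient_sq hV₀_one (NeZero.ne n)) hmom hmom2
end

section
/- Let n ≥ 1 be odd. There exists an even Schwartz function g: ℝ → ℝ whose Fourier transform ĝ(t) = ∫_ℝ g(τ) e^{−itτ} dτ is smooth, compactly supported, and vanishes on a neighborhood of 0, such that, with f: [0,∞) → ℝ defined by f(σ) = g(√σ) (so f(τ²) = g(τ), and f is smooth on [0,∞)), one has ∫_{ℝⁿ} f^{(k)}(|ξ|²) dξ ≠ 0 for every integer k ≥ n. -/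
open MeasureTheory Real Filter

/-- Fourier transform with the convention `ĝ(t) = ∫ g(τ) e^{-itτ} dτ`. -/
noncomputable def fourierTr (g : ℝ → ℝ) (t : ℝ) : ℂ :=
  ∫ τ : ℝ, (g τ : ℂ) * Complex.exp (-Complex.I * t * τ)

/-!
For an even Schwartz function `φ` put `g(τ) = ∫ φ(v) cos(2πvτ) dv`. Differentiation of `g` in the
variable `σ = τ²` is, up to a constant, `(1/τ) d/dτ`, and on the Fourier side it becomes integration
in the variable `s = πv²`: if `φ(v) = F(πv²)`, then `g' = -2πτ h`, where `h` is the transform of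
`(∫_s^∞ F)(πv²)`. Hence, when `F ≥ 0` is a bump supported away from `0`, all `σ`-derivatives of
`f(σ) = g(√σ)` are multiples of transforms `g_j` of nonnegative functions `F_j(πv²)`, with `F_0 = F`
and `F_{j+1} = ∫_s^∞ F_j`.

In polar coordinates `∫ f^{(k)}(|ξ|²) dξ` is a multiple of the moment `∫_0^∞ r^{n-1} g_k(r) dr`.
Since `g_j' = -2πr g_{j+1}`, integration by parts lowers the pair (exponent, index) by `(2, 1)`, and
the moment becomes a positive multiple of `∫_0^∞ g_j = F_j(0) / 2` with `j ≥ 1` or of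
`g_j(0) = ∫ F_j(πv²) dv`, according to the parity of `n`. Both numbers are positive.
-/

open Set Topology
open scoped FourierTransform SchwartzMap ContDiff

theorem hasDerivAt_integral_Ioi {E : Type*} [NormedAddCommGroup E] [NormedSpace ℝ E]
    [CompleteSpace E] {f : ℝ → E} {a : ℝ} (hf : Continuous f) (hfi : IntegrableOn f (Ioi a))
    (s : ℝ) : HasDerivAt (fun u => ∫ x in Ioi u, f x) (-f s) s := by
  have hsplit : (fun u => ∫ x in Ioi u, f x) =
      fun u => (∫ x in u..a, f x) + ∫ x in Ioi a, f x := by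
    funext u
    exact (intervalIntegral.integral_interval_add_Ioi' (hf.intervalIntegrable u a) hfi).symm
  rw [hsplit]
  exact (intervalIntegral.integral_hasDerivAt_left (hf.intervalIntegrable s a)
    hf.stronglyMeasurable.stronglyMeasurableAtFilter hf.continuousAt).add_const _

theorem setIntegral_pos_of_continuous_nonneg_nonzero {X : Type*} [TopologicalSpace X]
    [MeasurableSpace X] {μ : Measure X} [μ.IsOpenPosMeasure] {U : Set X} {f : X → ℝ} {x : X}
    (hU : IsOpen U) (hf : Continuous f) (hfi : IntegrableOn f U μ) (hf_nonneg : 0 ≤ f)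
    (hxU : x ∈ U) (hx : f x ≠ 0) : 0 < ∫ y in U, f y ∂μ := by
  rw [setIntegral_pos_iff_support_of_nonneg_ae (ae_of_all _ hf_nonneg) hfi]
  exact (hf.isOpen_support.inter hU).measure_pos μ ⟨x, hx, hxU⟩

/-- A smooth nonnegative function of the squared frequency `s = t²`, vanishing for large `s` and
not identically zero on `s > 0`. Nothing is required as `s → -∞`: only `s ≥ 0` matters for the
even function `t ↦ F (t²)`. -/
structure Profile where
  toFun : ℝ → ℝ
  contDiff : ContDiff ℝ ∞ toFun
  nonneg : ∀ s, 0 ≤ toFun s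
  eventually_eq_zero : ∀ᶠ s in atTop, toFun s = 0
  exists_pos : ∃ s > 0, 0 < toFun s

namespace Profile

instance : CoeFun Profile fun _ => ℝ → ℝ := ⟨toFun⟩

theorem integrableOn_Ioi (F : Profile) (a : ℝ) : IntegrableOn F (Ioi a) := by
  have hzero : F.toFun =O[atTop] (0 : ℝ → ℝ) :=
    EventuallyEq.trans_isBigO F.eventually_eq_zero (Asymptotics.isBigO_refl _ _)
  have hloc : LocallyIntegrableOn F (Ici a) :=
    F.contDiff.continuous.locallyIntegrable.locallyIntegrableOn _
  exact (hloc.integrableOn_of_isBigO_atTop hzero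
    ((integrable_zero ℝ ℝ volume).integrableAtFilter _)).mono_set Ioi_subset_Ici_self

theorem setIntegral_Ioi_pos (F : Profile) {a s : ℝ} (has : a < s) (hs : 0 < F s) :
    0 < ∫ x in Ioi a, F x :=
  setIntegral_pos_of_continuous_nonneg_nonzero isOpen_Ioi F.contDiff.continuous
    (F.integrableOn_Ioi a) F.nonneg has hs.ne'

theorem hasDerivAt_integral_Ioi (F : Profile) (s : ℝ) :
    HasDerivAt (fun u => ∫ x in Ioi u, F x) (-F s) s :=
  _root_.hasDerivAt_integral_Ioi F.contDiff.continuous (F.integrableOn_Ioi 0) s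

/-- The primitive `s ↦ ∫_s^∞ F` of `-F` that vanishes for large `s`. -/
noncomputable def tail (F : Profile) : Profile where
  toFun s := ∫ x in Ioi s, F x
  contDiff := by
    rw [contDiff_infty_iff_deriv, funext fun s => (F.hasDerivAt_integral_Ioi s).deriv]
    exact ⟨fun s => (F.hasDerivAt_integral_Ioi s).differentiableAt, F.contDiff.neg⟩
  nonneg s := integral_nonneg F.nonneg
  eventually_eq_zero := by
    obtain ⟨b, hb⟩ := eventually_atTop.mp F.eventually_eq_zero
    filter_upwards [eventually_ge_atTop b] with s hs
    exact setIntegral_eq_zero_of_forall_eq_zero fun x hx => hb x (hs.trans (le_of_lt hx))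
  exists_pos := by
    obtain ⟨s, hs, hFs⟩ := F.exists_pos
    exact ⟨s / 2, half_pos hs, F.setIntegral_Ioi_pos (half_lt_self hs) hFs⟩

theorem hasDerivAt_tail (F : Profile) (s : ℝ) : HasDerivAt F.tail (-F s) s :=
  F.hasDerivAt_integral_Ioi s

theorem tail_zero_pos (F : Profile) : 0 < F.tail 0 :=
  let ⟨_, hs, hFs⟩ := F.exists_pos
  F.setIntegral_Ioi_pos hs hFs

theorem contDiff_comp_mul_sq (F : Profile) (c : ℝ) : ContDiff ℝ ∞ fun t => F (c * t ^ 2) :=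
  F.contDiff.comp (contDiff_const.mul (contDiff_id.pow 2))

theorem hasCompactSupport_comp_mul_sq (F : Profile) {c : ℝ} (hc : 0 < c) :
    HasCompactSupport fun t => F (c * t ^ 2) := by
  have hsq : Tendsto (fun t : ℝ => c * t ^ 2) (cocompact ℝ) atTop := by
    have hnorm := (tendsto_pow_atTop two_ne_zero).comp (tendsto_norm_cocompact_atTop (E := ℝ))
    simpa only [Function.comp_def, norm_eq_abs, sq_abs] using hnorm.const_mul_atTop hc
  rw [hasCompactSupport_iff_eventuallyEq]
  exact (hsq.eventually F.eventually_eq_zero).filter_mono coclosedCompact_eq_cocompact.le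

/-- The even Schwartz function `v ↦ F (π v²)`. The factor `π` makes `tail` correspond to
differentiation of the Fourier transform without spurious constants. -/
noncomputable def toSchwartzMap (F : Profile) : 𝓢(ℝ, ℝ) :=
  (F.hasCompactSupport_comp_mul_sq pi_pos).toSchwartzMap (F.contDiff_comp_mul_sq π)

theorem toSchwartzMap_apply (F : Profile) (v : ℝ) : F.toSchwartzMap v = F (π * v ^ 2) := rfl

theorem toSchwartzMap_neg (F : Profile) (v : ℝ) : F.toSchwartzMap (-v) = F.toSchwartzMap v := by
  rw [toSchwartzMap_apply, toSchwartzMap_apply, neg_sq]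

theorem hasDerivAt_toSchwartzMap_tail (F : Profile) (v : ℝ) :
    HasDerivAt F.tail.toSchwartzMap (-(2 * π * v * F.toSchwartzMap v)) v := by
  have hsq : HasDerivAt (fun v : ℝ => π * v ^ 2) (2 * π * v) v := by
    refine ((hasDerivAt_pow 2 v).const_mul π).congr_deriv ?_
    push_cast
    ring
  refine ((F.hasDerivAt_tail _).comp v hsq).congr_deriv ?_
  rw [toSchwartzMap_apply]
  ring

theorem integral_toSchwartzMap_pos (F : Profile) : 0 < ∫ v, F.toSchwartzMap v := by
  obtain ⟨s, hs, hFs⟩ := F.exists_pos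
  refine integral_pos_of_integrable_nonneg_nonzero (x := √(s / π)) F.toSchwartzMap.continuous
    F.toSchwartzMap.integrable (fun v => F.nonneg _) ?_
  rw [toSchwartzMap_apply, sq_sqrt (by positivity), mul_div_cancel₀ s pi_ne_zero]
  exact hFs.ne'

theorem exists_eventually_nhds_zero_eq_zero : ∃ F : Profile, ∀ᶠ s in 𝓝 0, F s = 0 := by
  let b : ContDiffBump (2 : ℝ) := ⟨1 / 2, 1, by norm_num, by norm_num⟩
  have hb : ∀ s : ℝ, 1 ≤ |s - 2| → b s = 0 := fun s hs => b.zero_of_le_dist hs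
  refine ⟨⟨b, b.contDiff, fun s => b.nonneg, ?_, 2, two_pos, ?_⟩, ?_⟩
  · filter_upwards [eventually_ge_atTop 3] with s hs
    exact hb s (le_abs.mpr (Or.inl (by linarith)))
  · exact b.pos_of_mem_ball (Metric.mem_ball_self one_pos)
  · filter_upwards [Iic_mem_nhds one_pos] with s hs
    exact hb s (le_abs.mpr (Or.inr (by linarith [mem_Iic.mp hs])))

end Profile

/-- A real Schwartz function regarded as complex valued, the form in which Mathlib's Fourier
transform accepts it. -/
noncomputable abbrev complexify (φ : 𝓢(ℝ, ℝ)) : 𝓢(ℝ, ℂ) := φ.postcompCLM Complex.ofRealCLM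

/-- The cosine transform `τ ↦ ∫ φ(v) cos(2πvτ) dv`, encoded as the real part of Mathlib's Fourier
transform so that it is a Schwartz function by construction. -/
noncomputable def cosTransform (φ : 𝓢(ℝ, ℝ)) : 𝓢(ℝ, ℝ) :=
  (𝓕 (complexify φ)).postcompCLM Complex.reCLM

section CosTransform

variable {φ ψ : 𝓢(ℝ, ℝ)}

theorem cosTransform_apply (φ : 𝓢(ℝ, ℝ)) (τ : ℝ) :
    cosTransform φ τ = ∫ v, φ v * cos (2 * π * v * τ) := by
  have hint : Integrable fun v : ℝ => 𝐞 (-(v * τ)) • (φ v : ℂ) := by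
    simpa [mul_comm] using (fourierIntegral_convergent_iff τ).2 (complexify φ).integrable
  calc cosTransform φ τ = (∫ v : ℝ, 𝐞 (-(v * τ)) • (φ v : ℂ)).re :=
        congrArg Complex.re (fourier_real_eq _ τ)
    _ = ∫ v : ℝ, (𝐞 (-(v * τ)) • (φ v : ℂ)).re := (integral_re hint).symm
    _ = ∫ v, φ v * cos (2 * π * v * τ) := by
        congr with v
        rw [Circle.smul_def, fourierChar_apply, smul_eq_mul, Complex.re_mul_ofReal,
          Complex.exp_ofReal_mul_I_re, mul_neg, cos_neg, mul_comm, mul_assoc (2 * π)]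

theorem cosTransform_neg (φ : 𝓢(ℝ, ℝ)) (τ : ℝ) : cosTransform φ (-τ) = cosTransform φ τ := by
  simp only [cosTransform_apply, mul_neg, cos_neg]

theorem cosTransform_zero (φ : 𝓢(ℝ, ℝ)) : cosTransform φ 0 = ∫ v, φ v := by
  simp only [cosTransform_apply, mul_zero, cos_zero, mul_one]

theorem integral_cosTransform (φ : 𝓢(ℝ, ℝ)) : ∫ τ, cosTransform φ τ = φ 0 := by
  calc ∫ τ, cosTransform φ τ = (∫ τ, 𝓕 (complexify φ) τ).re :=
        integral_re (𝓕 (complexify φ)).integrable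
    _ = (𝓕⁻ (𝓕 (complexify φ)) 0).re := by
        rw [SchwartzMap.fourierInv_coe, fourierInv_eq]
        simp only [inner_zero_right, AddChar.map_zero_eq_one, one_smul]
    _ = φ 0 := by rw [FourierTransform.fourierInv_fourier_eq]; rfl

theorem ofReal_cosTransform (hφ : ∀ v, φ (-v) = φ v) (τ : ℝ) :
    (cosTransform φ τ : ℂ) = 𝓕 (complexify φ) τ := by
  have hconj : (starRingEnd ℂ) (𝓕 (complexify φ) τ) = 𝓕 (complexify φ) τ := by
    rw [SchwartzMap.fourier_coe, fourier_real_eq, ← integral_conj, ← integral_neg_eq_self]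
    congr with v
    simp [Circle.smul_def, hφ, ← Circle.coe_inv_eq_conj, ← AddChar.map_neg_eq_inv]
  exact Complex.conj_eq_iff_re.mp hconj

theorem fourierTr_cosTransform (hφ : ∀ v, φ (-v) = φ v) (t : ℝ) :
    fourierTr (cosTransform φ) t = φ (t / (2 * π)) := by
  calc fourierTr (cosTransform φ) t = 𝓕 (𝓕 (complexify φ)) (t / (2 * π)) := by
        rw [SchwartzMap.fourier_coe, fourier_real_eq_integral_exp_smul, fourierTr]
        congr with τ
        rw [ofReal_cosTransform hφ, smul_eq_mul, mul_comm]
        congr 2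
        push_cast
        field_simp
    _ = 𝓕⁻ (𝓕 (complexify φ)) (-(t / (2 * π))) := by
        rw [SchwartzMap.fourierInv_coe, fourierInv_eq_fourier_neg, neg_neg,
          SchwartzMap.fourier_coe]
    _ = φ (t / (2 * π)) := by
        rw [FourierTransform.fourierInv_fourier_eq]
        exact congrArg Complex.ofReal (hφ _)

theorem hasDerivAt_fourier_of_hasDerivAt {Φ Ψ : 𝓢(ℝ, ℂ)}
    (hΨ : ∀ v : ℝ, HasDerivAt Ψ (-(2 * π * v * Φ v)) v) (τ : ℝ) :
    HasDerivAt (𝓕 Φ : 𝓢(ℝ, ℂ)) (-(2 * π * τ * 𝓕 Ψ τ)) τ := by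
  obtain ⟨Ψ', hderiv⟩ : ∃ Ψ' : 𝓢(ℝ, ℂ), deriv Ψ = Ψ' := ⟨SchwartzMap.derivCLM ℂ ℂ Ψ, rfl⟩
  have hΨ' : ∀ v : ℝ, Ψ' v = -(2 * π * v * Φ v) := fun v => hderiv ▸ (hΨ v).deriv
  have hvΦ : Integrable fun v : ℝ => v • Φ v := by
    refine (Ψ'.integrable.const_mul (-(2 * (π : ℂ))⁻¹)).congr (ae_of_all _ fun v => ?_)
    have hπ : (π : ℂ) ≠ 0 := Complex.ofReal_ne_zero.mpr pi_ne_zero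
    simp only [hΨ', Complex.real_smul]
    field_simp
  have hmul : (fun v : ℝ => (-2 * π * Complex.I * v) • Φ v) = ⇑(Complex.I • Ψ') := by
    funext v
    rw [smul_apply, hΨ', smul_eq_mul, smul_eq_mul]
    ring
  have hΨ'_fourier : 𝓕 Ψ' τ = (2 * π * Complex.I * τ) • 𝓕 Ψ τ := by
    rw [SchwartzMap.fourier_coe, ← hderiv]
    exact congrFun (fourier_deriv Ψ.integrable Ψ.differentiable (hderiv ▸ Ψ'.integrable)) τ
  refine (hasDerivAt_fourier Φ.integrable hvΦ τ).congr_deriv ?_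
  rw [hmul, ← SchwartzMap.fourier_coe, FourierTransform.fourier_smul, smul_apply, hΨ'_fourier,
    smul_eq_mul, smul_eq_mul]
  linear_combination (2 * π * τ * 𝓕 Ψ τ) * Complex.I_sq

theorem hasDerivAt_cosTransform (hψ : ∀ v, HasDerivAt ψ (-(2 * π * v * φ v)) v) (τ : ℝ) :
    HasDerivAt (cosTransform φ) (-(2 * π * τ * cosTransform ψ τ)) τ := by
  have hΨ : ∀ v : ℝ, HasDerivAt (complexify ψ) (-(2 * π * v * complexify φ v)) v := fun v =>
    (hψ v).ofReal_comp.congr_deriv (by push_cast; rfl)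
  refine (Complex.reCLM.hasFDerivAt.comp_hasDerivAt τ
    (hasDerivAt_fourier_of_hasDerivAt hΨ τ)).congr_deriv ?_
  rw [Complex.reCLM_apply, Complex.neg_re, ← Complex.ofReal_ofNat, ← Complex.ofReal_mul,
    ← Complex.ofReal_mul, Complex.re_ofReal_mul]
  rfl

end CosTransform

section Moments

variable {c : ℝ} {u v : 𝓢(ℝ, ℝ)}

theorem integrable_pow_mul_schwartzMap (u : 𝓢(ℝ, ℝ)) (m : ℕ) :
    Integrable fun x : ℝ => x ^ m * u x := by
  refine (u.integrable_pow_mul volume m).mono'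
    ((continuous_id.pow m).mul u.continuous).aestronglyMeasurable (ae_of_all _ fun x => ?_)
  rw [norm_mul, norm_pow]

theorem mul_integral_Ioi_mul_eq (huv : ∀ x, HasDerivAt u (-(c * x * v x)) x) :
    c * ∫ x in Ioi (0 : ℝ), x * v x = u 0 := by
  have hint : IntegrableOn (fun x => -(c * x * v x)) (Ioi 0) := by
    simpa only [pow_one, mul_assoc, neg_mul] using
      ((integrable_pow_mul_schwartzMap v 1).const_mul (-c)).integrableOn
  have h := integral_Ioi_of_hasDerivAt_of_tendsto' (fun x _ => huv x) hint
    (tendsto_zero_of_hasDerivAt_of_integrableOn_Ioi (fun x _ => huv x) hint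
      u.integrable.integrableOn)
  simpa only [mul_assoc, integral_neg, integral_const_mul, zero_sub, neg_inj] using h

theorem mul_integral_Ioi_pow_add_two_mul_eq
    (huv : ∀ x, HasDerivAt u (-(c * x * v x)) x) (m : ℕ) :
    c * ∫ x in Ioi (0 : ℝ), x ^ (m + 2) * v x
      = (m + 1) * ∫ x in Ioi (0 : ℝ), x ^ m * u x := by
  have hderiv : ∀ x, HasDerivAt (fun x => x ^ (m + 1) * u x)
      ((m + 1) * (x ^ m * u x) - c * (x ^ (m + 2) * v x)) x := fun x => by
    refine ((hasDerivAt_pow (m + 1) x).mul (huv x)).congr_deriv ?_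
    rw [Nat.add_sub_cancel]
    push_cast
    ring
  have hu : IntegrableOn (fun x => (m + 1) * (x ^ m * u x)) (Ioi 0) :=
    ((integrable_pow_mul_schwartzMap u m).const_mul _).integrableOn
  have hv : IntegrableOn (fun x => c * (x ^ (m + 2) * v x)) (Ioi 0) :=
    ((integrable_pow_mul_schwartzMap v (m + 2)).const_mul c).integrableOn
  have h := integral_Ioi_of_hasDerivAt_of_tendsto' (fun x _ => hderiv x) (hu.sub hv)
    (tendsto_zero_of_hasDerivAt_of_integrableOn_Ioi (fun x _ => hderiv x) (hu.sub hv)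
      (integrable_pow_mul_schwartzMap u (m + 1)).integrableOn)
  rw [integral_sub hu hv, integral_const_mul, integral_const_mul, zero_pow m.succ_ne_zero,
    zero_mul, sub_zero] at h
  exact (sub_eq_zero.mp h).symm

end Moments

section Ladder

variable {c : ℝ}

theorem integral_Ioi_pow_mul_pos {g : ℕ → 𝓢(ℝ, ℝ)} (hc : 0 < c)
    (hg : ∀ j x, HasDerivAt (g j) (-(c * x * g (j + 1) x)) x) (hg_zero : ∀ j, 0 < g j 0)
    (hg_int : ∀ j, 0 < ∫ x in Ioi (0 : ℝ), g (j + 1) x) :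
    ∀ {m j : ℕ}, m < 2 * j → 0 < ∫ x in Ioi (0 : ℝ), x ^ m * g j x
  | 0, j + 1, _ => by simpa only [pow_zero, one_mul] using hg_int j
  | 1, j + 1, _ => by
    simp only [pow_one]
    exact pos_of_mul_pos_right (mul_integral_Ioi_mul_eq (hg j) ▸ hg_zero j) hc.le
  | m + 2, j + 1, hmj => by
    have ih := integral_Ioi_pow_mul_pos hc hg hg_zero hg_int (show m < 2 * j by omega)
    refine pos_of_mul_pos_right ?_ hc.le
    rw [mul_integral_Ioi_pow_add_two_mul_eq (hg j)]
    positivity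

theorem iteratedDeriv_comp_sqrt {g : ℕ → ℝ → ℝ}
    (hg : ∀ j, ∀ x > 0, HasDerivAt (g j) (-(c * x * g (j + 1) x)) x) (k : ℕ) {σ : ℝ} (hσ : 0 < σ) :
    iteratedDeriv k (fun σ => g 0 √σ) σ = (-(c / 2)) ^ k * g k √σ := by
  induction k generalizing σ with
  | zero => rw [iteratedDeriv_zero, pow_zero, one_mul]
  | succ k ih =>
    have hk : iteratedDeriv k (fun σ => g 0 √σ) =ᶠ[𝓝 σ] fun σ => (-(c / 2)) ^ k * g k √σ := by
      filter_upwards [lt_mem_nhds hσ] with s hs using ih hs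
    have hsqrt : 0 < √σ := sqrt_pos.mpr hσ
    rw [iteratedDeriv_succ, hk.deriv_eq]
    refine (((hg k _ hsqrt).comp σ (hasDerivAt_sqrt hσ.ne')).const_mul _).deriv.trans ?_
    field_simp
    ring

theorem integral_iteratedDeriv_comp_sqrt_norm_sq {E : Type*} [NormedAddCommGroup E]
    [NormedSpace ℝ E] [FiniteDimensional ℝ E] [Nontrivial E] [MeasurableSpace E] [BorelSpace E]
    (μ : Measure E) [μ.IsAddHaarMeasure] {g : ℕ → ℝ → ℝ}
    (hg : ∀ j, ∀ x > 0, HasDerivAt (g j) (-(c * x * g (j + 1) x)) x) (k : ℕ) :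
    ∫ ξ, iteratedDeriv k (fun σ => g 0 √σ) (‖ξ‖ ^ 2) ∂μ =
      (-(c / 2)) ^ k * (Module.finrank ℝ E * μ.real (Metric.ball 0 1) *
        ∫ r in Ioi (0 : ℝ), r ^ (Module.finrank ℝ E - 1) * g k r) := by
  have hradial : ∀ r ∈ Ioi (0 : ℝ), r ^ (Module.finrank ℝ E - 1) *
      iteratedDeriv k (fun σ => g 0 √σ) (r ^ 2) =
        (-(c / 2)) ^ k * (r ^ (Module.finrank ℝ E - 1) * g k r) := fun r hr => by
    rw [iteratedDeriv_comp_sqrt hg k (pow_pos hr 2), sqrt_sq (le_of_lt hr)]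
    ring
  rw [integral_fun_norm_addHaar μ fun r => iteratedDeriv k (fun σ => g 0 √σ) (r ^ 2)]
  simp only [smul_eq_mul, nsmul_eq_mul]
  rw [setIntegral_congr_fun measurableSet_Ioi hradial, integral_const_mul]
  ring

end Ladder

namespace Profile

/-- The transforms `g_j` of the iterated tails of `F`. They satisfy `g_j' = -2πτ g_{j+1}`, so up to
the factor `(-π)^j` the function `g_j(√σ)` is the `j`-th derivative of `g_0(√σ)`. -/
noncomputable def cosLadder (F : Profile) (j : ℕ) : 𝓢(ℝ, ℝ) :=
  cosTransform (tail^[j] F).toSchwartzMap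

variable (F : Profile)

theorem fourierTr_cosLadder_zero :
    fourierTr (F.cosLadder 0) = fun t => (F ((4 * π)⁻¹ * t ^ 2) : ℂ) := by
  funext t
  rw [cosLadder, fourierTr_cosTransform (toSchwartzMap_neg _), toSchwartzMap_apply]
  congr 2
  field_simp
  norm_num

theorem hasDerivAt_cosLadder (j : ℕ) (τ : ℝ) :
    HasDerivAt (F.cosLadder j) (-(2 * π * τ * F.cosLadder (j + 1) τ)) τ := by
  simp only [cosLadder, Function.iterate_succ_apply']
  exact hasDerivAt_cosTransform (hasDerivAt_toSchwartzMap_tail _) τ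

theorem cosLadder_zero_pos (j : ℕ) : 0 < F.cosLadder j 0 := by
  rw [cosLadder, cosTransform_zero]
  exact integral_toSchwartzMap_pos _

theorem integral_Ioi_cosLadder_succ_pos (j : ℕ) :
    0 < ∫ τ in Ioi (0 : ℝ), F.cosLadder (j + 1) τ := by
  have heven : ∀ τ, F.cosLadder (j + 1) |τ| = F.cosLadder (j + 1) τ := fun τ => by
    rcases abs_choice τ with h | h <;> rw [h]
    exact cosTransform_neg _ τ
  have hline : ∫ τ, F.cosLadder (j + 1) τ = (tail^[j] F).tail 0 := by
    rw [cosLadder, integral_cosTransform, toSchwartzMap_apply, Function.iterate_succ_apply',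
      zero_pow two_ne_zero, mul_zero]
  have hhalf := integral_comp_abs (f := F.cosLadder (j + 1))
  simp only [heven, hline] at hhalf
  exact pos_of_mul_pos_right (hhalf ▸ tail_zero_pos _) zero_le_two

theorem integral_Ioi_pow_mul_cosLadder_pos {m j : ℕ} (hmj : m < 2 * j) :
    0 < ∫ x in Ioi (0 : ℝ), x ^ m * F.cosLadder j x :=
  integral_Ioi_pow_mul_pos two_pi_pos F.hasDerivAt_cosLadder F.cosLadder_zero_pos
    F.integral_Ioi_cosLadder_succ_pos hmj

theorem neg_one_pow_mul_integral_iteratedDeriv_pos {E : Type*} [NormedAddCommGroup E]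
    [NormedSpace ℝ E] [FiniteDimensional ℝ E] [Nontrivial E] [MeasurableSpace E] [BorelSpace E]
    (μ : Measure E) [μ.IsAddHaarMeasure] {k : ℕ} (hk : Module.finrank ℝ E ≤ 2 * k) :
    0 < (-1) ^ k * ∫ ξ, iteratedDeriv k (fun σ => F.cosLadder 0 √σ) (‖ξ‖ ^ 2) ∂μ := by
  have hdim : 0 < Module.finrank ℝ E := Module.finrank_pos
  have hball : 0 < μ.real (Metric.ball 0 1) :=
    ENNReal.toReal_pos (Metric.measure_ball_pos _ _ one_pos).ne' measure_ball_lt_top.ne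
  have hmoment : 0 < ∫ r in Ioi (0 : ℝ), r ^ (Module.finrank ℝ E - 1) * F.cosLadder k r :=
    F.integral_Ioi_pow_mul_cosLadder_pos (by omega)
  rw [integral_iteratedDeriv_comp_sqrt_norm_sq μ (g := fun j => F.cosLadder j)
    (fun j x _ => F.hasDerivAt_cosLadder j x), ← mul_assoc, ← mul_pow, neg_one_mul, neg_neg]
  positivity

end Profile

theorem statement1_general :
    ∃ g : 𝓢(ℝ, ℝ),
      (∀ τ, g (-τ) = g τ) ∧
      ContDiff ℝ ∞ (fourierTr g) ∧
      HasCompactSupport (fourierTr g) ∧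
      (∀ᶠ t in 𝓝 0, fourierTr g t = 0) ∧
      ∀ n k : ℕ, 1 ≤ n → n ≤ 2 * k →
        0 < (-1) ^ k * ∫ ξ : EuclideanSpace ℝ (Fin n),
          iteratedDeriv k (fun σ => g √σ) (‖ξ‖ ^ 2) := by
  obtain ⟨F, hF⟩ := Profile.exists_eventually_nhds_zero_eq_zero
  refine ⟨F.cosLadder 0, cosTransform_neg _, ?_, ?_, ?_, fun n k hn hk => ?_⟩
  · rw [F.fourierTr_cosLadder_zero]
    exact Complex.ofRealCLM.contDiff.comp (F.contDiff_comp_mul_sq _)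
  · rw [F.fourierTr_cosLadder_zero]
    exact (F.hasCompactSupport_comp_mul_sq (by positivity)).comp_left Complex.ofReal_zero
  · have hsq : Tendsto (fun t : ℝ => (4 * π)⁻¹ * t ^ 2) (𝓝 0) (𝓝 0) :=
      Continuous.tendsto' (by fun_prop) _ _ (by simp)
    filter_upwards [hsq.eventually hF] with t ht
    simp only [F.fourierTr_cosLadder_zero, ht, Complex.ofReal_zero]
  · have : Nonempty (Fin n) := ⟨⟨0, hn⟩⟩
    exact F.neg_one_pow_mul_integral_iteratedDeriv_pos volume (by simpa using hk)

theorem statement1 (n : ℕ) (hn : 1 ≤ n) (hodd : Odd n) :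
    ∃ g : SchwartzMap ℝ ℝ,
      (∀ τ, g (-τ) = g τ) ∧
      ContDiff ℝ (⊤ : ℕ∞) (fourierTr g) ∧
      HasCompactSupport (fourierTr g) ∧
      (∀ᶠ t in nhds (0 : ℝ), fourierTr g t = 0) ∧
      ∀ k : ℕ, n ≤ k →
        (∫ ξ : EuclideanSpace ℝ (Fin n),
          iteratedDeriv k (fun σ : ℝ => g (Real.sqrt σ)) (‖ξ‖ ^ 2)) ≠ 0 := by
  obtain ⟨g, heven, hsmooth, hsupp, hzero, hpos⟩ := statement1_general
  exact ⟨g, heven, hsmooth, hsupp, hzero, fun k hk =>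
    right_ne_zero_of_mul (hpos n k hn (by omega)).ne'⟩
end

section
/- Let n ≥ 1 be odd and let k ≥ n be an integer. There exists a nonzero real constant A, depending only on n and k, such that for every even real-valued Schwartz function g, with f: [0,∞) → ℝ defined by f(σ) = g(√σ), one has ∫_{ℝⁿ} f^{(k)}(|ξ|²) dξ = A ∫_0^∞ g^{(2k−n)}(τ) τ^{−1} dτ. (The integral on the right converges since 2k − n is odd and g is even, so g^{(2k−n)} is odd and vanishes at 0.) -/
open MeasureTheory Real

/-!
In the variable `σ = x²` the derivative `d/dσ` is the operator `D = (2x)⁻¹ d/dx`, which maps even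
Schwartz functions to even Schwartz functions by Hadamard's lemma. In polar coordinates the left
side is therefore a multiple of `∫₀^∞ r^(n-1) (D^k g)(r) dr`. Since `n - 1` is even, each
integration by parts `∫ r^(2m+2) D u = -(m + 1/2) ∫ r^(2m) u` trades one `D` for a factor `r²`, and
`(n - 1)/2` of them leave `∫₀^∞ D^(j+1) g` with `2j + 1 = 2k - n`. On the other side,
differentiating `g' = 2x (D g)` shows
`∫ g^(2j+3)(x)/x dx = 4 (j + 1) ∫ (D g)^(2j+1)(x)/x dx`, the boundary term vanishing because
odd derivatives of even functions vanish at `0`; this descends to `∫ g'(x)/x dx = 2 ∫ D g`.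
-/

open Filter Topology SchwartzMap
open scoped ContDiff

section Calculus

variable {F : Type*} [NormedAddCommGroup F]

/-- The estimate `u x = O(|x|⁻ᵏ)` for every `k`, without any condition on the derivatives of `u`. -/
def RapidlyDecaying (u : ℝ → F) : Prop :=
  ∀ k : ℕ, ∃ C : ℝ, ∀ x, ‖x‖ ^ k * ‖u x‖ ≤ C

namespace RapidlyDecaying

variable {u v : ℝ → F}

theorem sub (hu : RapidlyDecaying u) (hv : RapidlyDecaying v) : RapidlyDecaying (u - v) := by
  intro k
  obtain ⟨B, hB⟩ := hu k
  obtain ⟨C, hC⟩ := hv k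
  refine ⟨B + C, fun x => ?_⟩
  calc ‖x‖ ^ k * ‖u x - v x‖ ≤ ‖x‖ ^ k * (‖u x‖ + ‖v x‖) := by gcongr; exact norm_sub_le _ _
    _ = ‖x‖ ^ k * ‖u x‖ + ‖x‖ ^ k * ‖v x‖ := mul_add _ _ _
    _ ≤ B + C := add_le_add (hB x) (hC x)

end RapidlyDecaying

variable [NormedSpace ℝ F]

theorem iteratedDeriv_succ_id_smul {h : ℝ → F} {j : ℕ} (hh : ContDiff ℝ (j + 1) h) (x : ℝ) :
    iteratedDeriv (j + 1) (fun y => y • h y) x =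
      x • iteratedDeriv (j + 1) h x + (j + 1 : ℝ) • iteratedDeriv j h x := by
  have leibniz := iteratedDerivWithin_smul (n := j + 1) (Set.mem_univ x) uniqueDiffOn_univ
    contDiff_id.contDiffAt.contDiffWithinAt hh.contDiffAt.contDiffWithinAt
  simp only [iteratedDerivWithin_univ] at leibniz
  rw [show (fun y => y • h y) = (id : ℝ → ℝ) • h from rfl, leibniz, Finset.sum_range_succ',
    Finset.sum_range_succ']
  simp [iteratedDeriv_id, add_comm, ← Nat.cast_smul_eq_nsmul ℝ]

namespace RapidlyDecaying

variable {u : ℝ → F}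

theorem const_smul (hu : RapidlyDecaying u) (c : ℝ) : RapidlyDecaying (c • u) := by
  intro k
  obtain ⟨C, hC⟩ := hu k
  refine ⟨‖c‖ * C, fun x => ?_⟩
  rw [Pi.smul_apply, norm_smul, mul_left_comm]
  exact mul_le_mul_of_nonneg_left (hC x) (norm_nonneg c)

theorem of_id_smul (hu : Continuous u) (h : RapidlyDecaying fun x => x • u x) :
    RapidlyDecaying u := by
  intro k
  obtain ⟨M, hM⟩ := (isCompact_closedBall (0 : ℝ) 1).exists_bound_of_continuousOn hu.continuousOn
  obtain ⟨C, hC⟩ := h k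
  refine ⟨max M C, fun x => ?_⟩
  rcases le_total ‖x‖ 1 with hx | hx
  · calc ‖x‖ ^ k * ‖u x‖ ≤ ‖u x‖ :=
          mul_le_of_le_one_left (norm_nonneg _) (pow_le_one₀ (norm_nonneg x) hx)
      _ ≤ M := hM x (mem_closedBall_zero_iff.2 hx)
      _ ≤ max M C := le_max_left M C
  · calc ‖x‖ ^ k * ‖u x‖ ≤ ‖x‖ ^ k * ‖x • u x‖ := by
          rw [norm_smul]
          gcongr
          exact le_mul_of_one_le_left (norm_nonneg _) hx
      _ ≤ C := hC x
      _ ≤ max M C := le_max_right M C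

theorem iteratedDeriv_of_id_smul (hu : ContDiff ℝ ∞ u)
    (h : ∀ j, RapidlyDecaying (iteratedDeriv j fun x => x • u x)) (j : ℕ) :
    RapidlyDecaying (iteratedDeriv j u) := by
  have hcont (j : ℕ) : Continuous (iteratedDeriv j u) :=
    hu.continuous_iteratedDeriv j (mod_cast le_top)
  induction j with
  | zero => exact of_id_smul (hcont 0) (by simpa only [iteratedDeriv_zero] using h 0)
  | succ j ih =>
    refine of_id_smul (hcont (j + 1)) ?_
    convert! (h (j + 1)).sub (ih.const_smul (j + 1 : ℝ)) using 1
    ext x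
    have hj : ContDiff ℝ (j + 1) u := hu.of_le (mod_cast le_top)
    rw [Pi.sub_apply, Pi.smul_apply, iteratedDeriv_succ_id_smul hj, add_sub_cancel_right]

end RapidlyDecaying

theorem iteratedDeriv_neg_of_even {f : ℝ → F} (hf : Function.Even f) (n : ℕ) (x : ℝ) :
    iteratedDeriv n f (-x) = (-1 : ℝ) ^ n • iteratedDeriv n f x := by
  simpa only [neg_neg, hf.eq] using iteratedDeriv_comp_neg n f (-x)

theorem iteratedDeriv_zero_of_even {f : ℝ → F} (hf : Function.Even f) {n : ℕ} (hn : Odd n) :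
    iteratedDeriv n f 0 = 0 := by
  have h := iteratedDeriv_neg_of_even hf n 0
  rw [neg_zero, hn.neg_one_pow, neg_one_smul] at h
  have : IsAddTorsionFree F := .of_isTorsionFree ℝ F
  exact self_eq_neg.1 h

/-- The mean `∫₀¹ tᵃ φ(t x) dt` of the dilates of `φ`. For `a = 0` and `φ = f'` it is the smooth
quotient `(f x - f 0) / x` of Hadamard's lemma. -/
noncomputable def dilationMean (a : ℕ) (φ : ℝ → F) (x : ℝ) : F :=
  ∫ t in (0 : ℝ)..1, t ^ a • φ (t * x)

theorem continuous_dilationMean (a : ℕ) {φ : ℝ → F} (hφ : Continuous φ) :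
    Continuous (dilationMean a φ) :=
  intervalIntegral.continuous_parametric_intervalIntegral_of_continuous'
    (f := fun x t => t ^ a • φ (t * x)) (by fun_prop) 0 1

theorem hasDerivAt_dilationMean (a : ℕ) {φ : ℝ → F} (hφ : ContDiff ℝ 1 φ) (x : ℝ) :
    HasDerivAt (dilationMean a φ) (dilationMean (a + 1) (deriv φ) x) x := by
  have hcont : Continuous (deriv φ) := hφ.continuous_deriv le_rfl
  obtain ⟨C, hC⟩ := (isCompact_closedBall (0 : ℝ) (‖x‖ + 1)).exists_bound_of_continuousOn
    hcont.continuousOn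
  have hbound (t : ℝ) (ht : t ∈ Set.uIoc 0 1) (y : ℝ) (hy : y ∈ Metric.ball x 1) :
      ‖t ^ (a + 1) • deriv φ (t * y)‖ ≤ C := by
    rw [Set.uIoc_of_le zero_le_one] at ht
    have ht1 : ‖t‖ ≤ 1 := by rw [Real.norm_of_nonneg ht.1.le]; exact ht.2
    have hy1 : ‖y‖ ≤ ‖x‖ + 1 := by
      linarith [norm_le_norm_add_norm_sub' y x, mem_ball_iff_norm.1 hy]
    have hty : ‖t * y‖ ≤ ‖x‖ + 1 := by
      rw [norm_mul]
      exact (mul_le_of_le_one_left (norm_nonneg y) ht1).trans hy1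
    rw [norm_smul, norm_pow]
    exact (mul_le_of_le_one_left (norm_nonneg _) (pow_le_one₀ (norm_nonneg t) ht1)).trans
      (hC _ (mem_closedBall_zero_iff.2 hty))
  have hderiv (t y : ℝ) :
      HasDerivAt (fun y => t ^ a • φ (t * y)) (t ^ (a + 1) • deriv φ (t * y)) y := by
    have hφ' := ((hφ.differentiable one_ne_zero) (t * y)).hasDerivAt
    simpa [pow_succ, mul_smul, Function.comp_def] using
      (hφ'.scomp y ((hasDerivAt_id y).const_mul t)).fun_const_smul (t ^ a)
  exact (intervalIntegral.hasDerivAt_integral_of_dominated_loc_of_deriv_le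
    (F := fun y t => t ^ a • φ (t * y)) (F' := fun y t => t ^ (a + 1) • deriv φ (t * y))
    (bound := fun _ => C) (Metric.ball_mem_nhds x one_pos)
    (Eventually.of_forall fun y => Continuous.aestronglyMeasurable (by fun_prop))
    (Continuous.intervalIntegrable (by fun_prop) _ _)
    (Continuous.aestronglyMeasurable (by fun_prop))
    (Eventually.of_forall hbound) intervalIntegrable_const
    (Eventually.of_forall fun t _ y _ => hderiv t y)).2

theorem contDiff_dilationMean (a : ℕ) {n : ℕ} {φ : ℝ → F} (hφ : ContDiff ℝ n φ) :
    ContDiff ℝ n (dilationMean a φ) := by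
  induction n generalizing a φ with
  | zero => exact contDiff_zero.2 (continuous_dilationMean a hφ.continuous)
  | succ n ih =>
    push_cast at hφ ⊢
    have hd := hasDerivAt_dilationMean a (hφ.of_le le_add_self)
    rw [contDiff_succ_iff_deriv, funext fun x => (hd x).deriv]
    exact ⟨fun x => (hd x).differentiableAt, by simp, ih _ (contDiff_succ_iff_deriv.1 hφ).2.2⟩

theorem even_dilationMean (a : ℕ) {φ : ℝ → F} (hφ : Function.Even φ) :
    Function.Even (dilationMean a φ) := fun x => by
  simp only [dilationMean, mul_neg, hφ.eq]

theorem smul_dilationMean_deriv [CompleteSpace F] {φ : ℝ → F} (hφ : ContDiff ℝ 1 φ) (x : ℝ) :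
    x • dilationMean 0 (deriv φ) x = φ x - φ 0 := by
  simpa [dilationMean] using
    intervalIntegral.integral_unitInterval_deriv_eq_sub (z₀ := 0) (z₁ := x) (f' := deriv φ)
      ((hφ.continuous_deriv le_rfl).comp (by fun_prop)).continuousOn
      fun t _ => ((hφ.differentiable one_ne_zero) _).hasDerivAt

end Calculus

section Schwartz

variable {F : Type*} [NormedAddCommGroup F] [NormedSpace ℝ F]

theorem coe_iterate_derivCLM (φ : 𝓢(ℝ, F)) (j : ℕ) :
    ⇑((derivCLM ℝ F)^[j] φ) = iteratedDeriv j φ := by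
  induction j with
  | zero => rw [Function.iterate_zero, id, iteratedDeriv_zero]
  | succ j ih =>
    ext x
    rw [Function.iterate_succ_apply', derivCLM_apply, ih, iteratedDeriv_succ]

theorem rapidlyDecaying_iteratedDeriv (φ : 𝓢(ℝ, F)) (j : ℕ) :
    RapidlyDecaying (iteratedDeriv j φ) := fun k =>
  ⟨_, fun x => φ.le_seminorm' ℝ k j x⟩

theorem integrable_pow_smul (φ : 𝓢(ℝ, F)) (m : ℕ) : Integrable fun x => x ^ m • φ x :=
  (integrable_norm_iff (by fun_prop)).1 <| by
    simpa only [norm_smul, norm_pow] using φ.integrable_pow_mul volume m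

variable [CompleteSpace F]

theorem integral_Ioi_deriv (φ : 𝓢(ℝ, F)) : ∫ x in Set.Ioi (0 : ℝ), deriv φ x = -φ 0 := by
  rw [integral_Ioi_of_hasDerivAt_of_tendsto' (fun x _ => φ.hasDerivAt x)
    (derivCLM ℝ F φ).integrable.integrableOn
    (φ.tendsto_cocompact.mono_left atTop_le_cocompact), zero_sub]

/-- The Schwartz function `φ x / x`, for `φ` vanishing at the origin. -/
noncomputable def hadamardQuotient (φ : 𝓢(ℝ, F)) (h0 : φ 0 = 0) : 𝓢(ℝ, F) where
  toFun := dilationMean 0 (deriv φ)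
  smooth' := contDiff_infty.2 fun n =>
    contDiff_dilationMean 0 ((derivCLM ℝ F φ).smooth n)
  decay' k j := by
    have hsmooth : ContDiff ℝ ∞ (dilationMean 0 (deriv φ)) :=
      contDiff_infty.2 fun n => contDiff_dilationMean 0 ((derivCLM ℝ F φ).smooth n)
    have hφ : (fun x => x • dilationMean 0 (deriv φ) x) = φ := by
      ext x
      rw [smul_dilationMean_deriv (φ.smooth 1), h0, sub_zero]
    simpa only [norm_iteratedFDeriv_eq_norm_iteratedDeriv] using
      RapidlyDecaying.iteratedDeriv_of_id_smul hsmooth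
        (fun j => by rw [hφ]; exact rapidlyDecaying_iteratedDeriv φ j) j k

theorem smul_hadamardQuotient (φ : 𝓢(ℝ, F)) (h0 : φ 0 = 0) (x : ℝ) :
    x • hadamardQuotient φ h0 x = φ x := by
  rw [← sub_zero (φ x), ← h0]
  exact smul_dilationMean_deriv (φ.smooth 1) x

theorem integrableOn_Ioi_inv_smul (φ : 𝓢(ℝ, F)) (h0 : φ 0 = 0) :
    IntegrableOn (fun x => x⁻¹ • φ x) (Set.Ioi 0) := by
  refine (hadamardQuotient φ h0).integrable.integrableOn.congr_fun (fun x hx => ?_)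
    measurableSet_Ioi
  have hx0 : x ≠ 0 := ne_of_gt hx
  simp only [← smul_hadamardQuotient φ h0 x, inv_smul_smul₀ hx0]

end Schwartz

/-- Even Schwartz functions on the line, the domain of the operator `EvenSchwartz.sqDeriv`. -/
abbrev EvenSchwartz (F : Type*) [NormedAddCommGroup F] [NormedSpace ℝ F] : Type _ :=
  {g : 𝓢(ℝ, F) // Function.Even g}

namespace EvenSchwartz

variable {F : Type*} [NormedAddCommGroup F] [NormedSpace ℝ F]

theorem deriv_zero (g : EvenSchwartz F) : deriv g.1 0 = 0 := by
  simpa only [iteratedDeriv_one] using iteratedDeriv_zero_of_even g.2 odd_one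

variable [CompleteSpace F]

theorem even_hadamardQuotient_deriv (g : EvenSchwartz F) :
    Function.Even (hadamardQuotient (derivCLM ℝ F g.1) g.deriv_zero) := by
  have hg (x : ℝ) : deriv (deriv g.1) (-x) = deriv (deriv g.1) x := by
    simpa [iteratedDeriv_succ] using iteratedDeriv_neg_of_even g.2 2 x
  exact even_dilationMean 0 hg

/-- The operator `g ↦ g' / (2x)`, which is `d/dσ` in the variable `σ = x²`. -/
noncomputable def sqDeriv (g : EvenSchwartz F) : EvenSchwartz F :=
  ⟨(2⁻¹ : ℝ) • hadamardQuotient (derivCLM ℝ F g.1) g.deriv_zero,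
    g.even_hadamardQuotient_deriv.const_smul 2⁻¹⟩

theorem deriv_eq_smul_sqDeriv (g : EvenSchwartz F) (x : ℝ) :
    deriv g.1 x = (2 * x) • g.sqDeriv.1 x := by
  have h := smul_hadamardQuotient (derivCLM ℝ F g.1) g.deriv_zero x
  rw [derivCLM_apply] at h
  rw [sqDeriv, smul_apply, smul_smul, ← h]
  congr 1
  ring

theorem iteratedDeriv_comp_sqrt (g : EvenSchwartz F) (k : ℕ) {σ : ℝ} (hσ : 0 < σ) :
    iteratedDeriv k (fun σ => g.1 √σ) σ = (sqDeriv^[k] g).1 √σ := by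
  induction k generalizing σ with
  | zero => rw [iteratedDeriv_zero, Function.iterate_zero, id]
  | succ k ih =>
    have heq : iteratedDeriv k (fun σ => g.1 √σ) =ᶠ[𝓝 σ] fun σ => (sqDeriv^[k] g).1 √σ := by
      filter_upwards [Ioi_mem_nhds hσ] with s hs using ih hs
    have hsqrt : √σ ≠ 0 := (Real.sqrt_pos.2 hσ).ne'
    have hchain := ((sqDeriv^[k] g).1.hasDerivAt √σ).scomp σ (Real.hasDerivAt_sqrt hσ.ne')
    rw [iteratedDeriv_succ, heq.deriv_eq, Function.iterate_succ_apply']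
    refine hchain.deriv.trans ?_
    rw [deriv_eq_smul_sqDeriv, smul_smul,
      one_div_mul_cancel (mul_ne_zero two_ne_zero hsqrt), one_smul]

theorem integral_pow_smul_sqDeriv (g : EvenSchwartz F) (m : ℕ) :
    ∫ x in Set.Ioi (0 : ℝ), x ^ (2 * (m + 1)) • g.sqDeriv.1 x =
      (-(2 * m + 1) / 2 : ℝ) • ∫ x in Set.Ioi (0 : ℝ), x ^ (2 * m) • g.1 x := by
  have hderiv (x : ℝ) : HasDerivAt (fun x => x ^ (2 * m + 1) • g.1 x)
      ((2 * m + 1 : ℝ) • x ^ (2 * m) • g.1 x +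
        (2 : ℝ) • x ^ (2 * (m + 1)) • g.sqDeriv.1 x) x := by
    convert! (hasDerivAt_pow (2 * m + 1) x).smul (g.1.hasDerivAt x) using 1
    rw [deriv_eq_smul_sqDeriv, add_comm]
    push_cast
    module
  have hg : IntegrableOn (fun x => (2 * m + 1 : ℝ) • x ^ (2 * m) • g.1 x) (Set.Ioi 0) :=
    ((integrable_pow_smul g.1 (2 * m)).smul _).integrableOn
  have hDg : IntegrableOn (fun x => (2 : ℝ) • x ^ (2 * (m + 1)) • g.sqDeriv.1 x) (Set.Ioi 0) :=
    ((integrable_pow_smul g.sqDeriv.1 (2 * (m + 1))).smul _).integrableOn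
  have hparts := integral_Ioi_deriv (smulLeftCLM F (fun x : ℝ => x ^ (2 * m + 1)) g.1)
  rw [smulLeftCLM_apply (by fun_prop), funext fun x => (hderiv x).deriv,
    integral_add hg hDg, integral_smul, integral_smul] at hparts
  simp only [zero_pow (Nat.succ_ne_zero (2 * m)), zero_smul, neg_zero] at hparts
  linear_combination (norm := module) (2⁻¹ : ℝ) • hparts

theorem iteratedDeriv_add_two (g : EvenSchwartz F) (n : ℕ) (x : ℝ) :
    iteratedDeriv (n + 2) g.1 x =
      (2 * x) • iteratedDeriv (n + 1) g.sqDeriv.1 x +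
        (2 * (n + 1) : ℝ) • iteratedDeriv n g.sqDeriv.1 x := by
  have hderiv : deriv g.1 = (2 : ℝ) • fun x => x • g.sqDeriv.1 x := by
    ext x
    rw [deriv_eq_smul_sqDeriv, mul_smul, Pi.smul_apply]
  rw [iteratedDeriv_succ', hderiv, iteratedDeriv_const_smul_field,
    iteratedDeriv_succ_id_smul (g.sqDeriv.1.smooth (n + 1)), smul_add, smul_smul, smul_smul]

theorem integral_inv_smul_iteratedDeriv (g : EvenSchwartz F) (j : ℕ) :
    ∫ x in Set.Ioi (0 : ℝ), x⁻¹ • iteratedDeriv (2 * (j + 1) + 1) g.1 x =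
      (4 * (j + 1) : ℝ) •
        ∫ x in Set.Ioi (0 : ℝ), x⁻¹ • iteratedDeriv (2 * j + 1) g.sqDeriv.1 x := by
  set φ := (derivCLM ℝ F)^[2 * j + 1] g.sqDeriv.1
  have hφ : ⇑φ = iteratedDeriv (2 * j + 1) g.sqDeriv.1 := coe_iterate_derivCLM _ _
  have hφ0 : φ 0 = 0 := by
    rw [hφ, iteratedDeriv_zero_of_even g.sqDeriv.2 (odd_two_mul_add_one j)]
  have hpoint (x : ℝ) (hx : x ∈ Set.Ioi 0) : x⁻¹ • iteratedDeriv (2 * (j + 1) + 1) g.1 x =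
      (2 : ℝ) • deriv φ x + (4 * (j + 1) : ℝ) • x⁻¹ • φ x := by
    have hx0 : x ≠ 0 := ne_of_gt hx
    rw [show 2 * (j + 1) + 1 = 2 * j + 1 + 2 by ring, iteratedDeriv_add_two, iteratedDeriv_succ,
      ← hφ, smul_add, smul_smul, smul_smul, smul_smul]
    congr 2
    · field_simp
    · push_cast
      ring
  have hderiv : IntegrableOn (fun x => (2 : ℝ) • deriv φ x) (Set.Ioi 0) :=
    ((derivCLM ℝ F φ).integrable.smul _).integrableOn
  have hquot : IntegrableOn (fun x => (4 * (j + 1) : ℝ) • x⁻¹ • φ x) (Set.Ioi 0) :=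
    (integrableOn_Ioi_inv_smul φ hφ0).smul _
  rw [setIntegral_congr_fun measurableSet_Ioi hpoint, integral_add hderiv hquot, integral_smul,
    integral_smul, integral_Ioi_deriv, hφ0, neg_zero, smul_zero, zero_add, hφ]

theorem integral_pow_smul_iterate_sqDeriv (g : EvenSchwartz F) (m : ℕ) :
    ∫ x in Set.Ioi (0 : ℝ), x ^ (2 * m) • (sqDeriv^[m] g).1 x =
      ((-1 / 2) ^ m * (2 * m - 1).doubleFactorial : ℝ) • ∫ x in Set.Ioi (0 : ℝ), g.1 x := by
  induction m with
  | zero => simp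
  | succ m ih =>
    rw [Function.iterate_succ_apply', integral_pow_smul_sqDeriv, ih, smul_smul,
      show 2 * (m + 1) - 1 = 2 * m + 1 by lia, Nat.doubleFactorial_add_one]
    congr 1
    push_cast
    ring

theorem integral_iterate_sqDeriv_succ (g : EvenSchwartz F) (j : ℕ) :
    ∫ x in Set.Ioi (0 : ℝ), (sqDeriv^[j + 1] g).1 x =
      (2 * 4 ^ j * j.factorial : ℝ)⁻¹ •
        ∫ x in Set.Ioi (0 : ℝ), x⁻¹ • iteratedDeriv (2 * j + 1) g.1 x := by
  induction j generalizing g with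
  | zero =>
    rw [← integral_smul]
    refine setIntegral_congr_fun measurableSet_Ioi fun x hx => ?_
    have hx0 : x ≠ 0 := ne_of_gt hx
    have hcoeff : 2⁻¹ * (x⁻¹ * (2 * x)) = 1 := by field_simp
    simp [deriv_eq_smul_sqDeriv, smul_smul, hcoeff]
  | succ j ih =>
    rw [Function.iterate_succ_apply, ih, integral_inv_smul_iteratedDeriv, smul_smul]
    congr 1
    push_cast [Nat.factorial_succ, pow_succ]
    field_simp

section Radial

variable {V : Type*} [NormedAddCommGroup V] [NormedSpace ℝ V] [FiniteDimensional ℝ V]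
  [Nontrivial V] [MeasurableSpace V] [BorelSpace V] (μ : Measure V) [μ.IsAddHaarMeasure]

theorem integral_iteratedDeriv_comp_sqrt_norm_sq (g : EvenSchwartz F) (k : ℕ) :
    ∫ ξ, iteratedDeriv k (fun σ => g.1 √σ) (‖ξ‖ ^ 2) ∂μ =
      (Module.finrank ℝ V * μ.real (Metric.ball 0 1)) •
        ∫ r in Set.Ioi (0 : ℝ), r ^ (Module.finrank ℝ V - 1) • (sqDeriv^[k] g).1 r := by
  rw [integral_fun_norm_addHaar μ fun r => iteratedDeriv k (fun σ => g.1 √σ) (r ^ 2),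
    ← Nat.cast_smul_eq_nsmul ℝ, smul_smul]
  congr 1
  refine setIntegral_congr_fun measurableSet_Ioi fun r (hr : 0 < r) => ?_
  simp only [iteratedDeriv_comp_sqrt g k (pow_pos hr 2), Real.sqrt_sq hr.le]

end Radial

end EvenSchwartz

theorem statement2_general {V F : Type*} [NormedAddCommGroup V] [NormedSpace ℝ V]
    [FiniteDimensional ℝ V] [MeasurableSpace V] [BorelSpace V] (μ : Measure V)
    [μ.IsAddHaarMeasure] [NormedAddCommGroup F] [NormedSpace ℝ F] [CompleteSpace F] (k : ℕ)
    (hodd : Odd (Module.finrank ℝ V)) (hk : Module.finrank ℝ V < 2 * k) :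
    ∃ A : ℝ, A ≠ 0 ∧ ∀ g : 𝓢(ℝ, F), (∀ τ, g (-τ) = g τ) →
      ∫ ξ, iteratedDeriv k (fun σ => g √σ) (‖ξ‖ ^ 2) ∂μ =
        A • ∫ τ in Set.Ioi (0 : ℝ), τ⁻¹ • iteratedDeriv (2 * k - Module.finrank ℝ V) g τ := by
  have : Nontrivial V := Module.nontrivial_of_finrank_pos (R := ℝ) hodd.pos
  have hball : μ.real (Metric.ball 0 1) ≠ 0 :=
    (ENNReal.toReal_pos (Metric.measure_ball_pos μ 0 one_pos).ne' measure_ball_lt_top.ne).ne'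
  have hdim : (Module.finrank ℝ V : ℝ) ≠ 0 := mod_cast hodd.pos.ne'
  obtain ⟨m, hm⟩ := hodd
  obtain ⟨j, rfl⟩ : ∃ j, k = m + (j + 1) := ⟨k - m - 1, by lia⟩
  have hfact : ((2 * m - 1).doubleFactorial : ℝ) ≠ 0 := mod_cast (Nat.doubleFactorial_pos _).ne'
  refine ⟨Module.finrank ℝ V * μ.real (Metric.ball 0 1) *
    ((-1 / 2) ^ m * (2 * m - 1).doubleFactorial) * (2 * 4 ^ j * j.factorial : ℝ)⁻¹,
    by simp [hdim, hball, hfact, Nat.factorial_ne_zero], fun g hg => ?_⟩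
  rw [EvenSchwartz.integral_iteratedDeriv_comp_sqrt_norm_sq μ ⟨g, hg⟩, hm, Nat.add_sub_cancel,
    Function.iterate_add_apply, EvenSchwartz.integral_pow_smul_iterate_sqDeriv,
    EvenSchwartz.integral_iterate_sqDeriv_succ, smul_smul, smul_smul,
    show 2 * (m + (j + 1)) - (2 * m + 1) = 2 * j + 1 by lia]

theorem statement2 (n k : ℕ) (hn : 1 ≤ n) (hodd : Odd n) (hk : n ≤ k) :
    ∃ A : ℝ, A ≠ 0 ∧
      ∀ g : SchwartzMap ℝ ℝ, (∀ τ, g (-τ) = g τ) →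
        (∫ ξ : EuclideanSpace ℝ (Fin n),
            iteratedDeriv k (fun σ : ℝ => g (Real.sqrt σ)) (‖ξ‖ ^ 2)) =
          A * ∫ τ in Set.Ioi (0 : ℝ), iteratedDeriv (2 * k - n) g τ / τ := by
  simpa [div_eq_inv_mul] using statement2_general (F := ℝ)
    (volume : Measure (EuclideanSpace ℝ (Fin n))) k (by simpa)
    (by rw [finrank_euclideanSpace_fin]; lia)
end

section
/- Let n ≥ 1 be an integer and let μ be a finite signed Borel measure on ℝ with compact support such that ∫_ℝ s^k dμ(s) = 0 for every integer k ≥ n. Then μ restricted to ℝ ∖ {0} is the zero measure; that is, μ = μ({0})·δ₀, where δ₀ is the Dirac measure at 0. -/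
open MeasureTheory Real

/-!
Multiply the Jordan parts of `μ` by the nonnegative weight `s ^ (2 * n)`. The `k`-th moments of the
weighted measures are the moments of order `2 * n + k ≥ n` of the Jordan parts, so they agree for
every `k`. A measure with an exponential moment on each side of `0` is determined by its moments:
these are the derivatives at `0` of its complex moment-generating function, which is analytic on a
vertical strip around the imaginary axis, where it is the characteristic function. So the weighted
measures are equal, and dividing by the weight, which vanishes only at `0`, shows that the Jordan
parts of `μ` agree away from `0`.
-/

open Filter ProbabilityTheory Set
open scoped Topology ENNReal

section Analytic

variable {𝕜 E : Type*} [NontriviallyNormedField 𝕜] [CharZero 𝕜]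
  [NormedAddCommGroup E] [NormedSpace 𝕜 E] [CompleteSpace E] {f g : 𝕜 → E} {z : 𝕜}

theorem eventuallyEq_of_forall_iteratedDeriv_eq (hf : AnalyticAt 𝕜 f z) (hg : AnalyticAt 𝕜 g z)
    (h : ∀ k, iteratedDeriv k f z = iteratedDeriv k g z) : f =ᶠ[𝓝 z] g := by
  have horder : analyticOrderAt (f - g) z = ⊤ := by
    refine ENat.eq_top_iff_forall_ge.2 fun m ↦ ?_
    rw [natCast_le_analyticOrderAt_iff_iteratedDeriv_eq_zero (hf.sub hg)]
    intro k _
    rw [iteratedDeriv_sub hf.contDiffAt hg.contDiffAt, h k, sub_self]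
  filter_upwards [analyticOrderAt_eq_top.1 horder] with w hw using sub_eq_zero.1 hw

end Analytic

section IntegrableExpSet

variable {Ω : Type*} {mΩ : MeasurableSpace Ω} {X : Ω → ℝ} {μ ν : Measure Ω}

theorem zero_mem_integrableExpSet_iff : 0 ∈ integrableExpSet X μ ↔ IsFiniteMeasure μ := by
  simpa [integrableExpSet] using
    integrable_const_iff_isFiniteMeasure (μ := μ) (one_ne_zero (α := ℝ))

theorem integrableExpSet_anti (h : μ ≤ ν) : integrableExpSet X ν ⊆ integrableExpSet X μ :=
  fun _ ht ↦ Integrable.mono_measure ht h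

theorem integrableExpSet_eq_univ_of_isBounded [IsFiniteMeasure μ] {K : Set ℝ}
    (hK : Bornology.IsBounded K) (hX : AEMeasurable X μ) (hXK : ∀ᵐ ω ∂μ, X ω ∈ K) :
    integrableExpSet X μ = univ := by
  obtain ⟨⟨a, ha⟩, b, hb⟩ := isBounded_iff_bddBelow_bddAbove.1 hK
  have hXab : ∀ᵐ ω ∂μ, X ω ∈ Icc a b := hXK.mono fun ω hω ↦ ⟨ha hω, hb hω⟩
  exact eq_univ_of_forall fun _ ↦ integrable_exp_mul_of_mem_Icc hX hXab

end IntegrableExpSet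

section Determinacy

variable {Ω Ω' : Type*} {mΩ : MeasurableSpace Ω} {mΩ' : MeasurableSpace Ω'} {X : Ω → ℝ}
  {Y : Ω' → ℝ} {μ : Measure Ω} {ν : Measure Ω'}

theorem eventuallyEq_complexMGF_of_forall_integral_pow_eq
    (hX : 0 ∈ interior (integrableExpSet X μ)) (hY : 0 ∈ interior (integrableExpSet Y ν))
    (h : ∀ k : ℕ, ∫ ω, X ω ^ k ∂μ = ∫ ω, Y ω ^ k ∂ν) :
    complexMGF X μ =ᶠ[𝓝 0] complexMGF Y ν := by
  refine eventuallyEq_of_forall_iteratedDeriv_eq (analyticAt_complexMGF hX)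
    (analyticAt_complexMGF hY) fun k ↦ ?_
  rw [iteratedDeriv_complexMGF hX, iteratedDeriv_complexMGF hY]
  simp only [zero_mul, Complex.exp_zero, mul_one]
  exact_mod_cast h k

theorem eqOn_complexMGF_of_eventuallyEq {z₀ : ℂ} (hX : z₀.re ∈ interior (integrableExpSet X μ))
    (hY : z₀.re ∈ interior (integrableExpSet Y ν)) (h : complexMGF X μ =ᶠ[𝓝 z₀] complexMGF Y ν) :
    EqOn (complexMGF X μ) (complexMGF Y ν)
      {z | z.re ∈ interior (integrableExpSet X μ) ∩ interior (integrableExpSet Y ν)} := by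
  have hstrip : Convex ℝ
      {z : ℂ | z.re ∈ interior (integrableExpSet X μ) ∩ interior (integrableExpSet Y ν)} :=
    (convex_integrableExpSet.interior.inter convex_integrableExpSet.interior).linear_preimage
      Complex.reLm
  exact (analyticOnNhd_complexMGF.mono fun _ hz ↦ hz.1).eqOn_of_preconnected_of_eventuallyEq
    (analyticOnNhd_complexMGF.mono fun _ hz ↦ hz.2) hstrip.isPreconnected ⟨hX, hY⟩ h

theorem map_eq_map_of_forall_integral_pow_eq (hX : 0 ∈ interior (integrableExpSet X μ))
    (hY : 0 ∈ interior (integrableExpSet Y ν)) (h : ∀ k : ℕ, ∫ ω, X ω ^ k ∂μ = ∫ ω, Y ω ^ k ∂ν) :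
    μ.map X = ν.map Y := by
  have := zero_mem_integrableExpSet_iff.1 (interior_subset hX)
  have := zero_mem_integrableExpSet_iff.1 (interior_subset hY)
  have hmgf := eqOn_complexMGF_of_eventuallyEq hX hY
    (eventuallyEq_complexMGF_of_forall_integral_pow_eq hX hY h)
  refine Measure.ext_of_charFun (funext fun t ↦ ?_)
  rw [← complexMGF_mul_I (aemeasurable_of_mem_interior_integrableExpSet hX),
    ← complexMGF_mul_I (aemeasurable_of_mem_interior_integrableExpSet hY)]
  exact hmgf (by simpa using ⟨hX, hY⟩)

theorem measure_ext_of_forall_integral_pow_eq {P Q : Measure ℝ}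
    (hP : 0 ∈ interior (integrableExpSet id P)) (hQ : 0 ∈ interior (integrableExpSet id Q))
    (h : ∀ k : ℕ, ∫ x, x ^ k ∂P = ∫ x, x ^ k ∂Q) : P = Q := by
  simpa using map_eq_map_of_forall_integral_pow_eq hP hQ h

end Determinacy

section WithDensity

variable {Ω : Type*} {mΩ : MeasurableSpace Ω} {μ ν : Measure Ω}

theorem restrict_eq_of_withDensity_eq {w : Ω → ℝ≥0∞} (hw : Measurable w) {s : Set Ω}
    (hs : MeasurableSet s) (hw_ne_zero : ∀ x ∈ s, w x ≠ 0) (hw_ne_top : ∀ x ∈ s, w x ≠ ∞)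
    (h : μ.withDensity w = ν.withDensity w) : μ.restrict s = ν.restrict s := by
  have hinv (ρ : Measure Ω) :
      ((ρ.withDensity w).restrict s).withDensity (fun x ↦ (w x)⁻¹) = ρ.restrict s := by
    rw [restrict_withDensity hs]
    exact withDensity_inv_same hw (ae_restrict_of_forall_mem hs hw_ne_zero)
      (ae_restrict_of_forall_mem hs hw_ne_top)
  rw [← hinv μ, ← hinv ν, h]

variable {X : Ω → ℝ} {m : ℕ}

theorem interior_integrableExpSet_subset_withDensity_pow (hm : Even m) :
    interior (integrableExpSet X μ) ⊆
      interior (integrableExpSet X (μ.withDensity fun ω ↦ ENNReal.ofReal (X ω ^ m))) := by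
  refine interior_maximal (fun t ht ↦ ?_) isOpen_interior
  have hX : AEMeasurable X μ := aemeasurable_of_mem_interior_integrableExpSet ht
  refine (integrable_withDensity_iff_integrable_smul₀' (by fun_prop) (by simp)).2 ?_
  simpa only [ENNReal.toReal_ofReal (hm.pow_nonneg _), smul_eq_mul] using
    integrable_pow_mul_exp_of_mem_interior_integrableExpSet ht m

theorem integral_pow_withDensity_pow (hX : AEMeasurable X μ) (hm : Even m) (k : ℕ) :
    ∫ ω, X ω ^ k ∂(μ.withDensity fun ω ↦ ENNReal.ofReal (X ω ^ m)) = ∫ ω, X ω ^ (m + k) ∂μ := by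
  rw [integral_withDensity_eq_integral_toReal_smul₀ (by fun_prop) (by simp)]
  simp only [ENNReal.toReal_ofReal (hm.pow_nonneg _), smul_eq_mul, pow_add]

end WithDensity

theorem restrict_compl_zero_eq_of_forall_integral_pow_eq {P Q : Measure ℝ}
    (hP : 0 ∈ interior (integrableExpSet id P)) (hQ : 0 ∈ interior (integrableExpSet id Q))
    {n : ℕ} (h : ∀ k, n ≤ k → ∫ x, x ^ k ∂P = ∫ x, x ^ k ∂Q) :
    P.restrict {0}ᶜ = Q.restrict {0}ᶜ := by
  have hm : Even (2 * n) := even_two_mul n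
  refine restrict_eq_of_withDensity_eq (w := fun x ↦ ENNReal.ofReal (x ^ (2 * n))) (by fun_prop)
    (measurableSet_singleton 0).compl (fun x hx ↦ ?_) (by simp) ?_
  · exact (ENNReal.ofReal_pos.2 (hm.pow_pos hx)).ne'
  · have hweight (ρ : Measure ℝ) (k : ℕ) :
        ∫ x, x ^ k ∂(ρ.withDensity fun x ↦ ENNReal.ofReal (x ^ (2 * n))) =
          ∫ x, x ^ (2 * n + k) ∂ρ :=
      integral_pow_withDensity_pow aemeasurable_id hm k
    refine measure_ext_of_forall_integral_pow_eq
      (interior_integrableExpSet_subset_withDensity_pow hm hP)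
      (interior_integrableExpSet_subset_withDensity_pow hm hQ) fun k ↦ ?_
    rw [hweight, hweight, h _ (by omega)]

theorem signedMeasure_restrict_eq_zero_iff {α : Type*} [MeasurableSpace α] (μ : SignedMeasure α)
    {s : Set α} (hs : MeasurableSet s) :
    μ.restrict s = 0 ↔ μ.toJordanDecomposition.posPart.restrict s =
      μ.toJordanDecomposition.negPart.restrict s := by
  conv_lhs => rw [← μ.toSignedMeasure_toJordanDecomposition, JordanDecomposition.toSignedMeasure]
  rw [VectorMeasure.restrict_sub, VectorMeasure.restrict_toSignedMeasure hs,
    VectorMeasure.restrict_toSignedMeasure hs, sub_eq_zero,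
    Measure.toSignedMeasure_eq_toSignedMeasure_iff]

theorem statement5_general (n : ℕ) (μ : SignedMeasure ℝ)
    (hexp : 0 ∈ interior (integrableExpSet id μ.totalVariation))
    (hmom : ∀ k : ℕ, n ≤ k →
      (∫ s : ℝ, s ^ k ∂μ.toJordanDecomposition.posPart) =
        ∫ s : ℝ, s ^ k ∂μ.toJordanDecomposition.negPart) :
    μ.restrict {0}ᶜ = 0 := by
  have hpos := interior_mono (integrableExpSet_anti (Measure.le_add_right le_rfl)) hexp
  have hneg := interior_mono (integrableExpSet_anti (Measure.le_add_left le_rfl)) hexp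
  rw [signedMeasure_restrict_eq_zero_iff μ (measurableSet_singleton 0).compl]
  exact restrict_compl_zero_eq_of_forall_integral_pow_eq hpos hneg hmom

theorem statement5 (n : ℕ) (hn : 1 ≤ n) (μ : MeasureTheory.SignedMeasure ℝ)
    (hcpt : ∃ K : Set ℝ, IsCompact K ∧ μ.totalVariation Kᶜ = 0)
    (hmom : ∀ k : ℕ, n ≤ k →
      (∫ s : ℝ, s ^ k ∂μ.toJordanDecomposition.posPart) =
        ∫ s : ℝ, s ^ k ∂μ.toJordanDecomposition.negPart) :
    μ.restrict {0}ᶜ = 0 := by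
  obtain ⟨K, hK, hμK⟩ := hcpt
  exact statement5_general n μ
    (by simp [integrableExpSet_eq_univ_of_isBounded hK.isBounded aemeasurable_id hμK]) hmom
end

section
/- Let n ≥ 1, let R: [0,∞) → [0,∞) be smooth with R(r) ≤ A exp(−B r^{1+ε}) for some ε, A, B > 0, and suppose R′(r) vanishes only at r = 0 and at those r with R(r) = 0. Define V₀: ℝⁿ → [0,∞) by V₀(x) = R(|x|). Then the pushforward of Lebesgue measure on ℝⁿ under V₀, restricted to (0,∞), is absolutely continuous with respect to Lebesgue measure on ℝ; that is, for every Borel set E ⊆ (0,∞) of Lebesgue measure zero, vol(V₀^{−1}(E)) = 0. -/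
/-!
Near a point where its derivative is invertible, a map is close to an invertible linear map, and
such maps expand volumes by a definite factor; countably many such pieces cover the domain, so a
set whose image is null must itself be null. Applied to the profile `R` on the positive half-line
this shows that the radii `r` with `R r ∈ E` form a null set, and integration in polar coordinates
carries this over to the points `x` with `R ‖x‖ ∈ E`.
-/

open MeasureTheory Real

section NullSets

variable {F : Type*} [NormedAddCommGroup F] [NormedSpace ℝ F] [FiniteDimensional ℝ F]
  [MeasurableSpace F] [BorelSpace F] (μ : Measure F) [μ.IsAddHaarMeasure]

theorem exists_pos_forall_approximatesLinearOn_addHaar_eq_zero {A : F →L[ℝ] F} (hA : A.det ≠ 0) :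
    ∃ δ : NNReal, 0 < δ ∧ ∀ (s : Set F) (f : F → F),
      ApproximatesLinearOn f A s δ → μ (f '' s) = 0 → μ s = 0 := by
  obtain ⟨m, hm_pos, hm_lt⟩ : ∃ m : NNReal, 0 < (m : ENNReal) ∧ (m : ENNReal) < .ofReal |A.det| :=
    ENNReal.lt_iff_exists_nnreal_btwn.1 (ENNReal.ofReal_pos.2 (abs_pos.2 hA))
  obtain ⟨δ, hexpand, hδ⟩ :=
    ((mul_le_addHaar_image_of_lt_det μ A hm_lt).and self_mem_nhdsWithin).exists
  refine ⟨δ, hδ, fun s f hf himage => ?_⟩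
  have hmul : (m : ENNReal) * μ s = 0 := le_antisymm ((hexpand s f hf).trans_eq himage) zero_le
  exact (mul_eq_zero.1 hmul).resolve_left hm_pos.ne'

theorem addHaar_eq_zero_of_addHaar_image_eq_zero {f : F → F} {f' : F → F →L[ℝ] F} {s : Set F}
    (hf : ∀ x ∈ s, HasFDerivWithinAt f (f' x) s x) (hf' : ∀ x ∈ s, (f' x).det ≠ 0)
    (himage : μ (f '' s) = 0) : μ s = 0 := by
  rcases s.eq_empty_or_nonempty with rfl | hs
  · exact measure_empty
  have hδ : ∀ A : F →L[ℝ] F, ∃ δ : NNReal, δ ≠ 0 ∧ (A.det ≠ 0 → ∀ (t : Set F) (g : F → F),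
      ApproximatesLinearOn g A t δ → μ (g '' t) = 0 → μ t = 0) := by
    intro A
    by_cases hA : A.det = 0
    · exact ⟨1, one_ne_zero, fun h => absurd hA h⟩
    · obtain ⟨δ, hδ_pos, hnull⟩ := exists_pos_forall_approximatesLinearOn_addHaar_eq_zero μ hA
      exact ⟨δ, hδ_pos.ne', fun _ => hnull⟩
  choose δ hδ_ne hnull using hδ
  obtain ⟨t, A, -, -, hcover, happrox, hA⟩ :=
    exists_partition_approximatesLinearOn_of_hasFDerivWithinAt f s f' hf δ hδ_ne
  have hpiece : ∀ k, μ (s ∩ t k) = 0 := by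
    intro k
    obtain ⟨y, hy, hAy⟩ := hA hs k
    exact hnull (A k) (hAy ▸ hf' y hy) _ f (happrox k)
      (measure_mono_null (Set.image_mono Set.inter_subset_left) himage)
  rw [← Set.inter_eq_left.2 hcover, Set.inter_iUnion]
  exact measure_iUnion_null hpiece

theorem volume_eq_zero_of_volume_image_eq_zero {f f' : ℝ → ℝ} {s : Set ℝ}
    (hf : ∀ x ∈ s, HasDerivWithinAt f (f' x) s x) (hf' : ∀ x ∈ s, f' x ≠ 0)
    (himage : volume (f '' s) = 0) : volume s = 0 :=
  addHaar_eq_zero_of_addHaar_image_eq_zero volume (fun x hx => (hf x hx).hasFDerivWithinAt)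
    (fun x hx => by simpa only [ContinuousLinearMap.det_toSpanSingleton] using hf' x hx) himage

theorem quasiMeasurePreserving_subtype_val_volumeIoiPow (k : ℕ) :
    Measure.QuasiMeasurePreserving ((↑) : Set.Ioi (0 : ℝ) → ℝ) (.volumeIoiPow k) volume := by
  refine ⟨measurable_subtype_coe, ?_⟩
  refine ((withDensity_absolutelyContinuous _ _).map measurable_subtype_coe).trans ?_
  rw [map_comap_subtype_coe measurableSet_Ioi]
  exact Measure.restrict_le_self.absolutelyContinuous

theorem quasiMeasurePreserving_norm [Nontrivial F] :
    Measure.QuasiMeasurePreserving (norm : F → ℝ) μ volume := by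
  have hpolar : Measure.QuasiMeasurePreserving (fun x : ({0}ᶜ : Set F) => ‖(x : F)‖)
      (μ.comap (↑)) volume := by
    simpa only [Function.comp_def, homeomorphUnitSphereProd_apply_snd_coe] using
      (quasiMeasurePreserving_subtype_val_volumeIoiPow _).comp <|
        Measure.quasiMeasurePreserving_snd.comp
          μ.measurePreserving_homeomorphUnitSphereProd.quasiMeasurePreserving
  refine ⟨measurable_norm, ?_⟩
  rw [← restrict_compl_singleton (μ := μ) 0,
    ← map_comap_subtype_coe (measurableSet_singleton _).compl,
    Measure.map_map measurable_norm measurable_subtype_coe]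
  exact hpolar.absolutelyContinuous

theorem statement8_general [Nontrivial F] {R R' : ℝ → ℝ}
    (hR : ∀ r, 0 < r → R r ≠ 0 → HasDerivAt R (R' r) r)
    (hR' : ∀ r, 0 < r → R r ≠ 0 → R' r ≠ 0)
    {E : Set ℝ} (hE : 0 ∉ E) (hE_null : volume E = 0) :
    μ ((fun x : F => R ‖x‖) ⁻¹' E) = 0 := by
  set radii : Set ℝ := Set.Ioi 0 ∩ R ⁻¹' E
  have hR_ne : ∀ r ∈ radii, R r ≠ 0 := fun r hr => ne_of_mem_of_not_mem hr.2 hE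
  have hradii : volume radii = 0 :=
    volume_eq_zero_of_volume_image_eq_zero
      (fun r hr => (hR r hr.1 (hR_ne r hr)).hasDerivWithinAt)
      (fun r hr => hR' r hr.1 (hR_ne r hr))
      (measure_mono_null (Set.image_subset_iff.2 Set.inter_subset_right) hE_null)
  have hsubset : (fun x : F => R ‖x‖) ⁻¹' E ⊆ {0} ∪ norm ⁻¹' radii := fun x hx =>
    (eq_or_ne x 0).imp id fun hx0 => ⟨norm_pos_iff.2 hx0, hx⟩
  exact measure_mono_null hsubset <| measure_union_null (measure_singleton _)
    ((quasiMeasurePreserving_norm μ).preimage_null hradii)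

end NullSets

theorem statement8 (n : ℕ) (hn : 1 ≤ n)
    (R : ℝ → ℝ) (hR : ContDiffOn ℝ (⊤ : ℕ∞) R (Set.Ici 0))
    (hRnn : ∀ r, 0 ≤ r → 0 ≤ R r)
    (hRdec : ∃ ε A B : ℝ, 0 < ε ∧ 0 < A ∧ 0 < B ∧
      ∀ r, 0 ≤ r → R r ≤ A * Real.exp (-B * r ^ (1 + ε)))
    (hR' : ∀ r, 0 ≤ r → deriv R r = 0 → r = 0 ∨ R r = 0)
    (V₀ : EuclideanSpace ℝ (Fin n) → ℝ) (hV₀ : ∀ x, V₀ x = R ‖x‖) :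
    ∀ E : Set ℝ, E ⊆ Set.Ioi (0 : ℝ) → MeasurableSet E → volume E = 0 →
      volume (V₀ ⁻¹' E) = 0 := by
  intro E hE _ hE_null
  have : Nonempty (Fin n) := ⟨⟨0, hn⟩⟩
  obtain rfl : V₀ = fun x => R ‖x‖ := funext hV₀
  refine statement8_general volume (R' := deriv R) (fun r hr _ => ?_) (fun r hr hRr hderiv => ?_)
    (fun h0 => Set.self_notMem_Ioi (hE h0)) hE_null
  · exact ((hR.contDiffAt (Ici_mem_nhds hr)).differentiableAt (by simp)).hasDerivAt
  · exact (hR' r hr.le hderiv).elim hr.ne' hRr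
end

section
/- Let U ⊆ ℝ be an open set with 0 < vol(U) < ∞, where vol is Lebesgue measure. Then the topological frontier ∂U of U contains at least 2 points. Moreover, ∂U contains exactly 2 points if and only if U is a bounded open interval. (In particular, if U has the same measure as a bounded nonempty open interval I, then card(∂U) ≥ card(∂I), with equality if and only if U is an interval.) -/
open MeasureTheory Real

/-!
A connected set that meets `U` without being contained in it meets the frontier of `U`. A set of
finite length contains no closed ray, so both rays from a point of `U` meet the frontier, on either
side of the point. If the frontier is `{a, b}` with `a < b`, this places `U` inside `(a, b)`, and
the interval `(a, b)`, which meets `U` but not its frontier, must lie inside `U`.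
-/

section Connected

variable {X : Type*} [TopologicalSpace X] {s U : Set X}

theorem inter_frontier_nonempty_of_isPreconnected (hs : IsPreconnected s)
    (hmeet : (s ∩ U).Nonempty) (hnsub : ¬ s ⊆ U) : (s ∩ frontier U).Nonempty := by
  by_contra hempty
  have mem_interior : ∀ x ∈ s, x ∈ closure U → x ∈ interior U := fun x hxs hxU =>
    by_contra fun hx => hempty ⟨x, hxs, hxU, hx⟩
  obtain ⟨x, hxs, hxU⟩ := hmeet
  have hsubInterior : s ⊆ interior U :=
    hs.subset_of_closure_inter_subset isOpen_interior
      ⟨x, hxs, mem_interior x hxs (subset_closure hxU)⟩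
      fun y ⟨hyU, hys⟩ => mem_interior y hys (closure_mono interior_subset hyU)
  exact hnsub (hsubInterior.trans interior_subset)

end Connected

section LinearOrder

variable {α : Type*} [ConditionallyCompleteLinearOrder α] [DenselyOrdered α] [TopologicalSpace α]
  [OrderTopology α] {U : Set α} {a b x : α}

theorem exists_mem_frontier_lt (hU : IsOpen U) (hray : ¬ Set.Iic x ⊆ U) (hx : x ∈ U) :
    ∃ a ∈ frontier U, a < x := by
  obtain ⟨a, hax, ha⟩ :=
    inter_frontier_nonempty_of_isPreconnected isPreconnected_Iic ⟨x, Set.self_mem_Iic, hx⟩ hray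
  have hne : x ≠ a := (disjoint_frontier_iff_isOpen.2 hU).symm.ne_of_mem hx ha
  exact ⟨a, ha, lt_of_le_of_ne hax hne.symm⟩

theorem exists_mem_frontier_gt (hU : IsOpen U) (hray : ¬ Set.Ici x ⊆ U) (hx : x ∈ U) :
    ∃ b ∈ frontier U, x < b :=
  exists_mem_frontier_lt (α := αᵒᵈ) hU hray hx

theorem two_le_encard_frontier (hU : IsOpen U) (hne : U.Nonempty)
    (hIic : ∀ x, ¬ Set.Iic x ⊆ U) (hIci : ∀ x, ¬ Set.Ici x ⊆ U) : 2 ≤ (frontier U).encard := by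
  obtain ⟨x, hx⟩ := hne
  obtain ⟨a, ha, hax⟩ := exists_mem_frontier_lt hU (hIic x) hx
  obtain ⟨b, hb, hxb⟩ := exists_mem_frontier_gt hU (hIci x) hx
  calc 2 = ({a, b} : Set α).encard := (Set.encard_pair (hax.trans hxb).ne).symm
    _ ≤ (frontier U).encard := Set.encard_le_encard (Set.pair_subset ha hb)

theorem eq_Ioo_of_frontier_eq_pair (hU : IsOpen U) (hne : U.Nonempty)
    (hIic : ∀ x, ¬ Set.Iic x ⊆ U) (hIci : ∀ x, ¬ Set.Ici x ⊆ U) (hab : a < b)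
    (hfrontier : frontier U = {a, b}) : U = Set.Ioo a b := by
  have hsub : U ⊆ Set.Ioo a b := fun x hx => by
    obtain ⟨c, hc, hcx⟩ := exists_mem_frontier_lt hU (hIic x) hx
    obtain ⟨d, hd, hxd⟩ := exists_mem_frontier_gt hU (hIci x) hx
    have hac : a ≤ c := by rcases hfrontier ▸ hc with rfl | rfl <;> order
    have hdb : d ≤ b := by rcases hfrontier ▸ hd with rfl | rfl <;> order
    exact ⟨hac.trans_lt hcx, hxd.trans_le hdb⟩
  refine hsub.antisymm (by_contra fun hnsub => ?_)
  obtain ⟨y, ⟨hay, hyb⟩, hy⟩ := inter_frontier_nonempty_of_isPreconnected isPreconnected_Ioo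
    (hne.mono fun x hx => ⟨hsub hx, hx⟩) hnsub
  rcases hfrontier ▸ hy with rfl | rfl
  exacts [hay.false, hyb.false]

theorem encard_frontier_Ioo (hab : a < b) : (frontier (Set.Ioo a b)).encard = 2 := by
  rw [frontier_Ioo hab, Set.encard_pair hab.ne]

theorem encard_frontier_eq_two_iff (hU : IsOpen U) (hne : U.Nonempty)
    (hIic : ∀ x, ¬ Set.Iic x ⊆ U) (hIci : ∀ x, ¬ Set.Ici x ⊆ U) :
    (frontier U).encard = 2 ↔ ∃ a b : α, a < b ∧ U = Set.Ioo a b := by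
  refine ⟨fun h => ?_, fun ⟨a, b, hab, h⟩ => h ▸ encard_frontier_Ioo hab⟩
  obtain ⟨a, b, hab, hfrontier⟩ := Set.encard_eq_two.1 h
  rcases hab.lt_or_gt with hlt | hgt
  · exact ⟨a, b, hlt, eq_Ioo_of_frontier_eq_pair hU hne hIic hIci hlt hfrontier⟩
  · rw [Set.pair_comm] at hfrontier
    exact ⟨b, a, hgt, eq_Ioo_of_frontier_eq_pair hU hne hIic hIci hgt hfrontier⟩

theorem statement10_general (hU : IsOpen U) (hne : U.Nonempty)
    (hIic : ∀ x, ¬ Set.Iic x ⊆ U) (hIci : ∀ x, ¬ Set.Ici x ⊆ U) :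
    2 ≤ (frontier U).encard ∧
    ((frontier U).encard = 2 ↔ ∃ a b : α, a < b ∧ U = Set.Ioo a b) ∧
    ∀ a b : α, a < b →
      (frontier (Set.Ioo a b)).encard ≤ (frontier U).encard ∧
      ((frontier U).encard = (frontier (Set.Ioo a b)).encard ↔
        ∃ c d : α, c < d ∧ U = Set.Ioo c d) := by
  have hle := two_le_encard_frontier hU hne hIic hIci
  have hiff := encard_frontier_eq_two_iff hU hne hIic hIci
  refine ⟨hle, hiff, fun a b hab => ?_⟩
  rw [encard_frontier_Ioo hab]
  exact ⟨hle, hiff⟩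

end LinearOrder

theorem statement10 (U : Set ℝ) (hU : IsOpen U)
    (h0 : 0 < volume U) (hfin : volume U < ⊤) :
    2 ≤ (frontier U).encard ∧
    ((frontier U).encard = 2 ↔ ∃ a b : ℝ, a < b ∧ U = Set.Ioo a b) ∧
    ∀ a b : ℝ, a < b → volume U = volume (Set.Ioo a b) →
      (frontier (Set.Ioo a b)).encard ≤ (frontier U).encard ∧
      ((frontier U).encard = (frontier (Set.Ioo a b)).encard ↔
        ∃ c d : ℝ, c < d ∧ U = Set.Ioo c d) := by
  obtain ⟨hle, hiff, hIoo⟩ := statement10_general hU (nonempty_of_measure_ne_zero h0.ne')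
    (fun _ h => measure_ne_top_of_subset h hfin.ne Real.volume_Iic)
    (fun _ h => measure_ne_top_of_subset h hfin.ne Real.volume_Ici)
  exact ⟨hle, hiff, fun a b hab _ => hIoo a b hab⟩
end
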